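/- arXiv:1405.6238 — 3 statements merged into one kernel-verified Lean document; each statement's English description precedes it below -/
import Mathlib

section
/- Let I, K, R be integers with 2 ≤ I ≤ K ≤ R and R ≤ (2I + 2K + 1 − √(8K + 8I + 1))/2. Then, for F = ℝ and for F = ℂ, the SFS-CPD of an I×I×K SFS-tensor of SFS-rank R is generically unique. -/
/-!
Put `t = I + K - R - 1` and `ρ = R - K + 1`, so that `ρ + t = I`. The bound on `R` says exactly that
`R ≤ t (t + 1) / 2` (`exists_corank`), and the proof is Kruskal's, with the rank estimate for the
slices replaced by a sharper one that holds generically.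

*Genericity.* A pair `(A, C)` is called generic here when the entries of `A`, and those of `C`, are
algebraically independent over `ℚ`. Almost every pair is generic (`ae_algebraicIndependent`), since
there are countably many rational polynomials and the zero set of each nonzero one is null. For a
generic pair any `I` columns of `A` and any `K` columns of `C` are linearly independent.

*Low-rank slices* (`weight_add_le_of_finrank_add_le`). If `A` is generic, `D` is diagonal and
`A D Aᵀ` has rank at most `ρ = I - t`, then `D` has at most `ρ` nonzero entries. This is clear if `D`
has at most `I` nonzero entries. Otherwise `A D` has full row rank. Take `X` with `t` independent
rows and `X A D Aᵀ = 0`, and put `B = X A`. As the entries of `A` are algebraically independent,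
there is a derivation of the field `F` with `δ A = Z` for any prescribed `Z` (`exists_derivation`).
It gives `X Z D Bᵀ + B (δ D) Bᵀ + B D Zᵀ Xᵀ = 0`. The matrices `b_r b_rᵀ` formed from the columns of
`B` are linearly dependent because `B D Bᵀ = 0`, and there are at most `t (t + 1) / 2` of them, so a
nonzero symmetric `N` is orthogonal to all of them. Pairing with `N` kills the middle term
and leaves `tr (D Bᵀ N X Z) = 0` for every `Z`, so `D Bᵀ N X = 0`, which the rank
conditions on `X` and `A D` contradict.

*Permutation lemma* (`exists_equiv_smul`). Consider another decomposition `∑ a'_k ∘ a'_k ∘ c'_k` of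
`[A,A,C]_R` with at most `R` terms. For each functional `f`, the combination of frontal slices with
coefficients `f` is both `∑ f(c_r) a_r a_rᵀ` and `∑ f(c'_k) a'_k a'_kᵀ`. If at most `ρ` of the
`f(c'_k)` are nonzero, its rank is at most `ρ`, so by the previous step the number of nonzero
`f(c_r)` equals the rank and is at most the number of nonzero `f(c'_k)`. By Kruskal's
permutation lemma the `c'_k` are the `c_r` up to order and scaling.

*Conclusion* (`exists_equiv_terms`). Functionals supported on exactly `ρ` of the `c_r` show that each
`a'_k` lies in the span of every set of `ρ` columns of `A` that contains the matching one. As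
`ρ + 1 ≤ I`, it is a multiple of that column, and comparing coefficients shows that the
rank-1 terms agree.
-/


open MeasureTheory

noncomputable section

/-- The SFS-tensor `[A,A,C]_R` with entries `t_{ijk} = Σ_r A i r * A j r * C k r`. -/
def sfsSum {F : Type*} [CommRing F] {I K R : ℕ}
    (A : Fin I → Fin R → F) (C : Fin K → Fin R → F) :
    Fin I → Fin I → Fin K → F :=
  fun i j k => ∑ r : Fin R, A i r * A j r * C k r

/-- `T` is the sum of the `R` SFS rank-1 terms `a_r ∘ a_r ∘ c_r` with all vectors nonzero. -/
def IsSfsPD {F : Type*} [CommRing F] {I K : ℕ} (T : Fin I → Fin I → Fin K → F) (R : ℕ)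
    (a : Fin R → Fin I → F) (c : Fin R → Fin K → F) : Prop :=
  (∀ r, a r ≠ 0) ∧ (∀ r, c r ≠ 0) ∧
    ∀ i j k, T i j k = ∑ r : Fin R, a r i * a r j * c r k

/-- The SFS-rank of an SFS-tensor: the minimal number of SFS rank-1 terms. -/
def sfsRank {F : Type*} [CommRing F] {I K : ℕ} (T : Fin I → Fin I → Fin K → F) : ℕ :=
  sInf {R | ∃ a c, IsSfsPD T R a c}

/-- The SFS-CPD of `T` is unique: any two decompositions of `T` into `sfsRank T`
SFS rank-1 terms coincide up to permutation of the SFS rank-1 terms. -/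
def SfsCPDUnique {F : Type*} [CommRing F] {I K : ℕ} (T : Fin I → Fin I → Fin K → F) : Prop :=
  ∀ (a a' : Fin (sfsRank T) → Fin I → F) (c c' : Fin (sfsRank T) → Fin K → F),
    IsSfsPD T (sfsRank T) a c → IsSfsPD T (sfsRank T) a' c' →
    ∃ σ : Equiv.Perm (Fin (sfsRank T)),
      ∀ r i j k, a r i * a r j * c r k = a' (σ r) i * a' (σ r) j * c' (σ r) k

/-- The SFS-CPD of an `I×I×K` SFS-tensor of SFS-rank `R` is generically unique over `F`:
the set of pairs `(A,C)` for which the SFS-CPD of `[A,A,C]_R` is not unique has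
Lebesgue measure zero. -/
def SFSGenericallyUnique (F : Type*) [CommRing F] [MeasureSpace F] (I K R : ℕ) : Prop :=
  volume {p : (Fin I → Fin R → F) × (Fin K → Fin R → F) |
    ¬ SfsCPDUnique (sfsSum p.1 p.2)} = 0

open MvPolynomial Matrix

set_option linter.unusedSectionVars false

/-! ### Derivations of a field with prescribed values on algebraically independent elements -/

/-- Every extension of fields of characteristic zero is formally smooth: it is separably algebraic
over the purely transcendental extension generated by a transcendence basis. -/
theorem formallySmooth_of_charZero {k L : Type*} [Field k] [Field L] [Algebra k L] [CharZero k] :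
    Algebra.FormallySmooth k L := by
  obtain ⟨s, hs⟩ := exists_isTranscendenceBasis k L
  have := hs.isAlgebraic_field
  exact Algebra.FormallySmooth.of_algebraicIndependent_of_isSeparable hs.1

/-- Infinitesimal lifting for a formally smooth algebra `L` over `S`, phrased with ring
homomorphisms so that `B` may carry an `S`-algebra structure other than the inferred one. -/
theorem exists_lift_of_formallySmooth {S B L : Type*} [CommRing S] [CommRing B] [CommRing L]
    [Algebra S L] [Algebra.FormallySmooth S L] (φ : S →+* B) (g : B →+* L)
    (hg : Function.Surjective g) (hker : RingHom.ker g ^ 2 = ⊥)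
    (h : g.comp φ = algebraMap S L) :
    ∃ l : L →+* B, g.comp l = RingHom.id L ∧ l.comp (algebraMap S L) = φ := by
  let _ : Algebra S B := φ.toAlgebra
  let g' : B →ₐ[S] L := { g with commutes' := fun r => congrArg (fun f => f r) h }
  have hn : IsNilpotent (RingHom.ker (g' : B →+* L)) := ⟨2, hker⟩
  let l := Algebra.FormallySmooth.liftOfSurjective (AlgHom.id S L) g' hg hn
  refine ⟨l.toRingHom, ?_, ?_⟩
  · have := Algebra.FormallySmooth.comp_liftOfSurjective (AlgHom.id S L) g' hg hn
    ext x
    exact congrArg (fun f => f x) this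
  · ext x
    exact l.commutes x

/-- The homomorphism `X i ↦ x i + ε z i` from `ℚ[X]` to the dual numbers over `F` extends to `F`,
because `F` is formally smooth over `ℚ[X]`; its `ε`-part is the derivation. -/
theorem exists_derivation {σ F : Type*} [Field F] [CharZero F] (x : σ → F)
    (hx : AlgebraicIndependent ℚ x) (z : σ → F) :
    ∃ δ : Derivation ℤ F F, ∀ i, δ (x i) = z i := by
  let _ : Algebra (MvPolynomial σ ℚ) F := (aeval x : MvPolynomial σ ℚ →ₐ[ℚ] F).toAlgebra
  have hinj : Function.Injective (algebraMap (MvPolynomial σ ℚ) F) := hx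
  have : FaithfulSMul (MvPolynomial σ ℚ) F := (faithfulSMul_iff_algebraMap_injective _ _).2 hinj
  let _ : Algebra (FractionRing (MvPolynomial σ ℚ)) F := FractionRing.liftAlgebra _ _
  have : Algebra.FormallySmooth (MvPolynomial σ ℚ) (FractionRing (MvPolynomial σ ℚ)) :=
    .of_isLocalization (nonZeroDivisors _)
  have : CharZero (FractionRing (MvPolynomial σ ℚ)) :=
    (algebraMap (FractionRing (MvPolynomial σ ℚ)) F).charZero
  have : Algebra.FormallySmooth (FractionRing (MvPolynomial σ ℚ)) F := formallySmooth_of_charZero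
  have : Algebra.FormallySmooth (MvPolynomial σ ℚ) F :=
    .comp _ (FractionRing (MvPolynomial σ ℚ)) _
  let φ : MvPolynomial σ ℚ →+* TrivSqZeroExt F F :=
    (aeval (fun i => TrivSqZeroExt.inl (x i) + TrivSqZeroExt.inr (z i)) :
      MvPolynomial σ ℚ →ₐ[ℚ] TrivSqZeroExt F F).toRingHom
  let g : TrivSqZeroExt F F →+* F := (TrivSqZeroExt.fstHom F F F).toRingHom
  obtain ⟨l, hl1, hl2⟩ := exists_lift_of_formallySmooth φ g
    (fun y => ⟨TrivSqZeroExt.inl y, by simp [g]⟩)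
    (by
      rw [eq_bot_iff, pow_two, Ideal.mul_le]
      intro a ha b hb
      have ha : a.fst = 0 := ha
      have hb : b.fst = 0 := hb
      rw [Ideal.mem_bot]
      ext <;> simp [ha, hb])
    (by
      apply MvPolynomial.ringHom_ext
      · intro r
        change TrivSqZeroExt.fst (aeval _ (C r)) = aeval x (C r)
        rw [MvPolynomial.aeval_C, MvPolynomial.aeval_C]
        rfl
      · intro i
        change TrivSqZeroExt.fst (aeval _ (X i)) = aeval x (X i)
        simp)
  have h1 : ∀ y, (l y).fst = y := fun y => congrArg (fun f => f y) hl1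
  refine ⟨Derivation.mk'
    ((TrivSqZeroExt.sndHom F F).toAddMonoidHom.comp l.toAddMonoidHom).toIntLinearMap
    (fun a b => ?_), fun i => ?_⟩
  · change (l (a * b)).snd = a • (l b).snd + b • (l a).snd
    simp [h1, mul_comm]
  · change (l (x i)).snd = z i
    have : l (x i) = φ (X i) := by
      rw [← hl2]
      change l (x i) = l (aeval x (X i))
      simp
    rw [this]
    change TrivSqZeroExt.snd (aeval _ (X i)) = _
    simp

/-! ### Almost every matrix has algebraically independent entries -/

/-- The zero set of a nonzero polynomial is null, by induction on the number of variables and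
Fubini. -/
theorem volume_zeros_fin {F : Type*} [RCLike F] [MeasureSpace F] [BorelSpace F]
    [SigmaFinite (volume : Measure F)] [NullSingletonClass (volume : Measure F)] :
    ∀ (n : ℕ) (p : MvPolynomial (Fin n) F), p ≠ 0 →
      volume {x : Fin n → F | eval x p = 0} = 0 := by
  intro n
  induction n with
  | zero =>
    intro p hp
    obtain ⟨c, rfl⟩ := MvPolynomial.C_surjective (Fin 0) p
    have hc : c ≠ 0 := fun h => hp (by simp [h])
    simp [hc]
  | succ n ih =>
    intro p hp
    set q := finSuccEquiv F n p with hq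
    have hq0 : q ≠ 0 := by simpa [hq] using hp
    have hmeas : MeasurableSet
        {z : F × (Fin n → F) | eval (Fin.cons z.1 z.2 : Fin (n + 1) → F) p = 0} := by
      apply IsClosed.measurableSet
      refine isClosed_eq ?_ continuous_const
      exact (MvPolynomial.continuous_eval p).comp (by fun_prop)
    have key : volume
        {z : F × (Fin n → F) | eval (Fin.cons z.1 z.2 : Fin (n + 1) → F) p = 0} = 0 := by
      rw [Measure.volume_eq_prod, Measure.measure_prod_null hmeas]
      -- only finitely many first coordinates make the remaining polynomial vanish identically
      have hfin : {y : F | q.IsRoot (C y)}.Finite :=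
        (Polynomial.finite_setOfPred_isRoot hq0).preimage (MvPolynomial.C_injective _ _).injOn
      have hae : ∀ᵐ y : F, ¬ q.IsRoot (C y) := by
        rw [ae_iff]
        simpa using hfin.measure_zero _
      filter_upwards [hae] with y hy
      have := ih (Polynomial.eval (C y) q) hy
      rw [Pi.zero_apply, ← this]
      congr 1
      ext s
      simp only [Set.mem_preimage, Set.mem_ofPred_eq, eval_eq_eval_mv_eval', ← hq]
      rw [Polynomial.eval_map, ← Polynomial.eval₂_id, Polynomial.hom_eval₂]
      simp
    have hmp := volume_preserving_piFinSuccAbove (fun _ : Fin (n + 1) => F) 0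
    rw [← hmp.measure_preimage_equiv] at key
    rw [← key]
    congr 1
    ext x
    simp [MeasurableEquiv.piFinSuccAbove, Fin.insertNthEquiv]

theorem volume_zeros {F : Type*} [RCLike F] [MeasureSpace F] [BorelSpace F]
    [SigmaFinite (volume : Measure F)] [NullSingletonClass (volume : Measure F)]
    {σ : Type*} [Fintype σ]
    (p : MvPolynomial σ F) (hp : p ≠ 0) :
    volume {x : σ → F | eval x p = 0} = 0 := by
  let e := Fintype.equivFin σ
  have h := volume_zeros_fin (Fintype.card σ) (rename e p)
    (by simpa using (rename_injective e e.injective).ne hp)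
  have hmp := volume_preserving_arrowCongr' e (MeasurableEquiv.refl F) (.id volume)
  rw [← hmp.measure_preimage_equiv] at h
  rw [← h]
  congr 1
  ext x
  simp only [Set.mem_preimage, Set.mem_ofPred_eq, eval_rename]
  have : (MeasurableEquiv.arrowCongr' e (MeasurableEquiv.refl F) x) ∘ e = x := by
    ext i
    simp [MeasurableEquiv.arrowCongr', Equiv.arrowCongr']
  rw [this]

/-- Currying preserves Lebesgue measure. -/
theorem measurePreserving_uncurry {F : Type*} [MeasureSpace F]
    [SigmaFinite (volume : Measure F)] (m n : ℕ) :
    MeasurePreserving (fun (A : Fin m → Fin n → F) (q : Fin m × Fin n) => A q.1 q.2)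
      volume volume := by
  have hm : Measurable (fun (A : Fin m → Fin n → F) (q : Fin m × Fin n) => A q.1 q.2) := by
    fun_prop
  refine ⟨hm, ?_⟩
  symm
  refine Measure.pi_eq fun s hs => ?_
  rw [Measure.map_apply hm (MeasurableSet.univ_pi hs)]
  have : (fun (A : Fin m → Fin n → F) (q : Fin m × Fin n) => A q.1 q.2) ⁻¹' Set.univ.pi s =
      Set.univ.pi fun i => Set.univ.pi fun j => s (i, j) := by
    ext A
    simp [Set.mem_pi]
  rw [this, volume_pi_pi, Fintype.prod_prod_type]
  simp only [volume_pi_pi]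

/-- The exceptional set is the union of the zero sets of the countably many nonzero polynomials with
rational coefficients. -/
theorem ae_algebraicIndependent {F : Type*} [RCLike F] [MeasureSpace F] [BorelSpace F]
    [SigmaFinite (volume : Measure F)] [NullSingletonClass (volume : Measure F)] (m n : ℕ) :
    ∀ᵐ A : Fin m → Fin n → F,
      AlgebraicIndependent ℚ (fun q : Fin m × Fin n => A q.1 q.2) := by
  have h : ∀ᵐ x : Fin m × Fin n → F, AlgebraicIndependent ℚ x := by
    simp only [algebraicIndependent_iff]
    have : Countable (MvPolynomial (Fin m × Fin n) ℚ) :=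
      (AddMonoidAlgebra.coeff_injective (R := ℚ) (M := Fin m × Fin n →₀ ℕ)).countable
    rw [ae_all_iff]
    intro p
    by_cases hp : p = 0
    · simp [hp]
    · have h0 := volume_zeros (F := F) (MvPolynomial.map (algebraMap ℚ F) p)
        (by simpa using (map_injective _ (algebraMap ℚ F).injective).ne hp)
      rw [ae_iff, ← h0]
      congr 1
      ext x
      simp [hp, aeval_def, eval_map]
  exact (measurePreserving_uncurry m n).quasiMeasurePreserving.ae h

/-! ### Families of vectors in general position -/

/-- The family `v` has Kruskal rank at least `k`: any `k` of its members are linearly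
independent. Subsets of fewer than `k` members are included, which matters only if the family has
fewer than `k` members. -/
def KruskalRankGE (F : Type*) {V ι : Type*} [Field F] [AddCommGroup V] [Module F V]
    (k : ℕ) (v : ι → V) : Prop :=
  ∀ S : Finset ι, S.card ≤ k → LinearIndepOn F v (S : Set ι)

theorem kruskalRankGE_of_card_eq {F V ι : Type*} [Field F] [AddCommGroup V] [Module F V]
    [Fintype ι] {k : ℕ} {v : ι → V} (hk : k ≤ Fintype.card ι)
    (h : ∀ S : Finset ι, S.card = k → LinearIndepOn F v (S : Set ι)) : KruskalRankGE F k v := by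
  intro S hS
  obtain ⟨S', hsub, hS'⟩ := Finset.exists_superset_card_eq hS (by simpa using hk)
  exact (h S' hS').mono (by exact_mod_cast hsub)

/-- The columns of a matrix with algebraically independent entries are in general position: its
maximal minors are nonzero polynomials in the entries. -/
theorem kruskalRankGE_of_algebraicIndependent {F : Type*} [Field F] [CharZero F] {m n : ℕ}
    (hmn : m ≤ n) (A : Fin m → Fin n → F)
    (hA : AlgebraicIndependent ℚ (fun q : Fin m × Fin n => A q.1 q.2)) :
    KruskalRankGE F m (fun r i => A i r) := by
  refine kruskalRankGE_of_card_eq (by simpa using hmn) fun S hS => ?_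
  let f : Fin m ↪o Fin n := S.orderEmbOfFin hS
  let P : Matrix (Fin m) (Fin m) F := Matrix.of fun i j => A i (f j)
  have hP : AlgebraicIndependent ℚ (fun q : Fin m × Fin m => P q.1 q.2) := by
    have := hA.comp (Prod.map id f) (Function.injective_id.prodMap f.injective)
    exact this
  have hdet : P.det ≠ 0 := by
    intro h0
    apply Matrix.det_mvPolynomialX_ne_zero (Fin m) ℚ
    apply (algebraicIndependent_iff.1 hP)
    rw [AlgHom.map_det, Matrix.mvPolynomialX_mapMatrix_aeval, h0]
  have hli : LinearIndependent F P.col := Matrix.linearIndependent_cols_of_det_ne_zero hdet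
  have h2 : LinearIndepOn F (fun r i => A i r) (Set.range f) := by
    rw [linearIndepOn_range_iff f.injective]
    exact hli
  simpa [f] using h2

/-! ### The slices of an SFS-tensor -/

/-- The linear map of the symmetric matrix `∑ r, d r • a r (a r)ᵀ`. -/
def diagMap {F ι : Type*} [Field F] [Fintype ι] {n : ℕ} (a : ι → Fin n → F) (d : ι → F) :
    (Fin n → F) →ₗ[F] (Fin n → F) :=
  ∑ r, d r • (dotProductBilin F F (a r)).smulRight (a r)

theorem diagMap_apply {F ι : Type*} [Field F] [Fintype ι] {n : ℕ} (a : ι → Fin n → F)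
    (d : ι → F) (x : Fin n → F) : diagMap a d x = ∑ r, (d r * (a r ⬝ᵥ x)) • a r := by
  simp [diagMap, smul_smul]

open Classical in
/-- The number of nonzero coordinates. -/
def weight {F ι : Type*} [Field F] [Fintype ι] (d : ι → F) : ℕ :=
  (Finset.univ.filter fun r => d r ≠ 0).card

theorem range_diagMap_le {F ι : Type*} [Field F] [Fintype ι] {n : ℕ} (a : ι → Fin n → F)
    (d : ι → F) : LinearMap.range (diagMap a d) ≤ Submodule.span F (a '' {r | d r ≠ 0}) := by
  rintro _ ⟨x, rfl⟩
  rw [diagMap_apply]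
  refine Submodule.sum_mem _ fun r _ => ?_
  by_cases h : d r = 0
  · simp [h]
  · exact Submodule.smul_mem _ _ (Submodule.subset_span ⟨r, h, rfl⟩)

theorem finrank_range_diagMap_le {F ι : Type*} [Field F] [Fintype ι] {n : ℕ} (a : ι → Fin n → F)
    (d : ι → F) : Module.finrank F (LinearMap.range (diagMap a d)) ≤ weight d := by
  classical
  refine (Submodule.finrank_mono (range_diagMap_le a d)).trans ?_
  unfold weight
  have : a '' {r | d r ≠ 0} = ((Finset.univ.filter fun r => d r ≠ 0).image a : Finset _) := by
    ext; simp
  rw [this]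
  exact (finrank_span_finset_le_card _).trans Finset.card_image_le

/-- A vector dual to `a q` within the family supported by `d` is mapped to `d q • a q`. -/
theorem mem_range_diagMap {F ι : Type*} [Field F] [Fintype ι] {n : ℕ} (a : ι → Fin n → F)
    (d : ι → F) (h : LinearIndepOn F a {r | d r ≠ 0}) {q : ι} (hq : d q ≠ 0) :
    a q ∈ LinearMap.range (diagMap a d) := by
  classical
  obtain ⟨f, hfq, hfr⟩ := Submodule.exists_le_ker_of_notMem (h.notMem_span hq)
  obtain ⟨x, rfl⟩ := (dotProductEquiv F (Fin n)).surjective f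
  have hx : ∀ r, r ≠ q → d r * (a r ⬝ᵥ x) = 0 := by
    intro r hrq
    by_cases hr : d r = 0
    · simp [hr]
    · have : a r ∈ LinearMap.ker (dotProductEquiv F (Fin n) x) :=
        hfr (Submodule.subset_span ⟨r, ⟨hr, hrq⟩, rfl⟩)
      have h0 : x ⬝ᵥ a r = 0 := by simpa using this
      rw [dotProduct_comm, h0, mul_zero]
  have hxq : d q * (a q ⬝ᵥ x) ≠ 0 := by
    rw [dotProduct_comm]
    exact mul_ne_zero hq (by simpa using hfq)
  have hM : diagMap a d x = (d q * (a q ⬝ᵥ x)) • a q := by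
    rw [diagMap_apply, Finset.sum_eq_single q]
    · intro r _ hr
      rw [hx r hr, zero_smul]
    · simp
  refine ⟨(d q * (a q ⬝ᵥ x))⁻¹ • x, ?_⟩
  rw [map_smul, hM, smul_smul, inv_mul_cancel₀ hxq, one_smul]

theorem weight_le_finrank_range_diagMap {F ι : Type*} [Field F] [Fintype ι] {n : ℕ}
    (a : ι → Fin n → F) (d : ι → F) (h : LinearIndepOn F a {r | d r ≠ 0}) :
    weight d ≤ Module.finrank F (LinearMap.range (diagMap a d)) := by
  classical
  have h1 : Submodule.span F (a '' {r | d r ≠ 0}) ≤ LinearMap.range (diagMap a d) := by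
    rw [Submodule.span_le]
    rintro _ ⟨r, hr, rfl⟩
    exact mem_range_diagMap a d h hr
  refine le_trans ?_ (Submodule.finrank_mono h1)
  have h2 := finrank_span_eq_card h
  have h3 : Set.range (fun x : {r | d r ≠ 0} => a x) = a '' {r | d r ≠ 0} := by
    rw [Set.image_eq_range]
  rw [h3] at h2
  rw [h2]
  unfold weight
  rw [← Fintype.card_coe]
  exact le_of_eq (Fintype.card_congr (Equiv.subtypeEquivRight (by simp)))

/-! ### Low-rank combinations of generic rank-one symmetric matrices -/

theorem matrix_eq_zero_of_mul_eq_zero {F : Type*} [Field F] {l m n : ℕ}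
    {X : Matrix (Fin m) (Fin n) F} (hX : ∀ y, y ᵥ* X = 0 → y = 0)
    {Y : Matrix (Fin l) (Fin m) F} (h : Y * X = 0) : Y = 0 := by
  ext i j
  have : Y i ᵥ* X = 0 := by
    rw [← mul_apply_eq_vecMul, h]
    rfl
  rw [hX _ this]
  rfl

theorem Derivation.map_matrix_mul {F : Type*} [Field F] {l m n : ℕ} (δ : Derivation ℤ F F)
    (P : Matrix (Fin l) (Fin m) F) (Q : Matrix (Fin m) (Fin n) F) :
    (P * Q).map δ = P * Q.map δ + P.map δ * Q := by
  ext i j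
  simp only [map_apply, mul_apply, map_sum, Derivation.leibniz, smul_eq_mul,
    Finset.sum_add_distrib]
  congr 1
  exact Finset.sum_congr rfl fun _ _ => mul_comm _ _

/-- Let `b r` be the columns of `B`. Some nonzero symmetric `t × t` matrix is orthogonal to all
`b r (b r)ᵀ`, because these `R ≤ t (t + 1) / 2` matrices satisfy the linear relation with
coefficients `d` and so do not span the space of symmetric matrices. -/
theorem exists_orthogonal_symm {F : Type*} [Field F] {t R : ℕ} (hR : R ≤ t * (t + 1) / 2)
    (B : Matrix (Fin t) (Fin R) F) (d : Fin R → F) (hd : d ≠ 0)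
    (hB : B * diagonal d * Bᵀ = 0) :
    ∃ N : Matrix (Fin t) (Fin t) F, N ≠ 0 ∧ Nᵀ = N ∧ ∀ r, (Bᵀ * N * B) r r = 0 := by
  let mat : (Sym2 (Fin t) → F) →ₗ[F] Matrix (Fin t) (Fin t) F :=
    { toFun := fun f => of fun i j => f s(i, j)
      map_add' := fun f g => rfl
      map_smul' := fun c f => rfl }
  have hmat : ∀ f i j, mat f i j = f s(i, j) := fun _ _ _ => rfl
  let Φ : (Sym2 (Fin t) → F) →ₗ[F] (Fin R → F) :=
    { toFun := fun f r => (Bᵀ * mat f * B) r r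
      map_add' := fun f g => by ext r; simp [Matrix.mul_add, Matrix.add_mul]
      map_smul' := fun c f => by ext r; simp }
  have hΦ : ∀ f r, Φ f r = (Bᵀ * mat f * B) r r := fun _ _ => rfl
  -- the image of `Φ` lies in the hyperplane orthogonal to `d`
  have hmem : ∀ f, Φ f ∈ LinearMap.ker (dotProductEquiv F (Fin R) d) := by
    intro f
    have h1 : trace (Bᵀ * mat f * B * diagonal d) = 0 := by
      rw [Matrix.mul_assoc, Matrix.mul_assoc, trace_mul_comm, Matrix.mul_assoc, hB,
        Matrix.mul_zero, trace_zero]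
    rw [LinearMap.mem_ker, dotProductEquiv_apply_apply, ← h1]
    simp [trace, dotProduct, mul_diagonal, hΦ, mul_comm]
  have hlt : Module.finrank F (LinearMap.ker (dotProductEquiv F (Fin R) d)) < R := by
    have := Submodule.finrank_lt (s := LinearMap.ker (dotProductEquiv F (Fin R) d)) (by
      rw [Ne, LinearMap.ker_eq_top]
      simpa using hd)
    simpa using this
  have hcard : Module.finrank F (Sym2 (Fin t) → F) = t * (t + 1) / 2 := by
    rw [Module.finrank_pi, Sym2.card, Fintype.card_fin, Nat.choose_two_right, mul_comm]
    rfl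
  have hker := LinearMap.ker_ne_bot_of_finrank_lt (f := Φ.codRestrict _ hmem) (by omega)
  obtain ⟨f, hf, hf0⟩ := Submodule.exists_mem_ne_zero_of_ne_bot hker
  refine ⟨mat f, ?_, ?_, ?_⟩
  · intro h
    apply hf0
    ext z
    induction z with
    | _ i j => exact congrFun (congrFun h i) j
  · ext i j
    rw [transpose_apply, hmat, hmat, Sym2.eq_swap]
  · intro r
    have h1 : Φ f = 0 := by
      have := congrArg Subtype.val (LinearMap.mem_ker.1 hf)
      simpa using this
    rw [← hΦ, h1]
    rfl

/-- The infinitesimal core of the argument. If the rank of `M = A D Aᵀ` were at most `I - t`, then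
`X M = 0` for some `X` with `t` independent rows. Differentiating along a derivation with
`δ A = Z` gives `X (δ M) Xᵀ = 0`, that is, `X Z D Bᵀ + B (δ D) Bᵀ + B D Zᵀ Xᵀ = 0` where `B = X A`.
As `Z` varies the outer terms fill all symmetric `t × t` matrices, whereas the
matrices `B (δ D) Bᵀ` span a proper subspace. -/
theorem lt_finrank_range_add {F : Type*} [Field F] [CharZero F] {I R t : ℕ}
    (hR : R ≤ t * (t + 1) / 2) (A : Matrix (Fin I) (Fin R) F)
    (hA : AlgebraicIndependent ℚ (fun q : Fin I × Fin R => A q.1 q.2))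
    (d : Fin R → F) (hd : d ≠ 0) (hrow : ∀ x, x ᵥ* (A * diagonal d) = 0 → x = 0) :
    I < (A * diagonal d * Aᵀ).rank + t := by
  by_contra hcon
  push Not at hcon
  set M := A * diagonal d * Aᵀ with hM
  have hMT : Mᵀ = M := by
    rw [hM]
    simp [Matrix.transpose_mul, Matrix.mul_assoc]
  obtain ⟨X, hX, hXM⟩ : ∃ X : Matrix (Fin t) (Fin I) F,
      (∀ y, y ᵥ* X = 0 → y = 0) ∧ X * M = 0 := by
    have hk := LinearMap.finrank_range_add_finrank_ker M.mulVecLin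
    have hr : Module.finrank F (LinearMap.range M.mulVecLin) = M.rank := rfl
    rw [hr, Module.finrank_fin_fun] at hk
    obtain ⟨v, hv⟩ := exists_linearIndependent_of_le_finrank
      (R := F) (M := LinearMap.ker M.mulVecLin) (n := t) (by omega)
    refine ⟨of fun i => (v i : Fin I → F), ?_, ?_⟩
    · have h1 : LinearIndependent F (of fun i => (v i : Fin I → F)).row :=
        hv.map' (Submodule.subtype _) (Submodule.ker_subtype _)
      have h2 := Matrix.vecMul_injective_iff.2 h1
      intro y hy
      exact h2 (by simpa using hy)
    · rw [← Matrix.transpose_inj, Matrix.transpose_mul, hMT, Matrix.transpose_zero]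
      ext i j
      have h1 : M *ᵥ (v j : Fin I → F) = 0 := LinearMap.mem_ker.1 (v j).2
      exact congrFun h1 i
  set B := X * A with hB
  have hMX : M * Xᵀ = 0 := by
    rw [← hMT, ← Matrix.transpose_mul, hXM, Matrix.transpose_zero]
  have hBB : B * diagonal d * Bᵀ = 0 := by
    have : B * diagonal d * Bᵀ = X * M * Xᵀ := by
      simp only [hB, hM, Matrix.transpose_mul, Matrix.mul_assoc]
    rw [this, hXM, Matrix.zero_mul]
  obtain ⟨N, hN0, hNT, hN⟩ := exists_orthogonal_symm hR B d hd hBB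
  have htr : ∀ Z : Matrix (Fin I) (Fin R) F, trace ((diagonal d * Bᵀ * N * X) * Z) = 0 := by
    intro Z
    obtain ⟨δ, hδ⟩ := exists_derivation _ hA (fun q => Z q.1 q.2)
    have hδA : A.map δ = Z := by
      ext i j
      exact hδ (i, j)
    have hδd : (diagonal d).map δ = diagonal (fun r => δ (d r)) := by
      rw [Matrix.diagonal_map (map_zero δ)]
    have h1 : X * M.map δ * Xᵀ = 0 := by
      have h2 := δ.map_matrix_mul X M
      have h3 : (X * M).map δ = 0 := by
        rw [hXM]
        ext i j
        simp
      rw [h3] at h2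
      have h4 := congrArg (· * Xᵀ) h2
      simp only [Matrix.zero_mul, Matrix.add_mul] at h4
      rw [Matrix.mul_assoc (X.map δ), hMX, Matrix.mul_zero, add_zero] at h4
      exact h4.symm
    have hMδ : M.map δ = A * diagonal d * Zᵀ + A * diagonal (fun r => δ (d r)) * Aᵀ +
        Z * diagonal d * Aᵀ := by
      rw [hM, δ.map_matrix_mul, δ.map_matrix_mul, hδA, hδd, Matrix.transpose_map, hδA,
        Matrix.add_mul, add_assoc]
    have h5 : trace (N * (X * M.map δ * Xᵀ)) = 0 := by rw [h1, Matrix.mul_zero, trace_zero]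
    have h6 : N * (X * M.map δ * Xᵀ) = N * B * diagonal d * Zᵀ * Xᵀ +
        N * B * diagonal (fun r => δ (d r)) * Bᵀ + N * X * Z * diagonal d * Bᵀ := by
      simp only [hMδ, hB, Matrix.mul_add, Matrix.add_mul, Matrix.transpose_mul, Matrix.mul_assoc]
    have h7 : trace (N * B * diagonal (fun r => δ (d r)) * Bᵀ) = 0 := by
      rw [trace_mul_comm, ← Matrix.mul_assoc, ← Matrix.mul_assoc]
      simp [trace, mul_diagonal, hN]
    have h8 : trace (N * B * diagonal d * Zᵀ * Xᵀ) = trace (N * X * Z * diagonal d * Bᵀ) := by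
      rw [← trace_transpose]
      simp only [Matrix.transpose_mul, Matrix.transpose_transpose, hNT, diagonal_transpose]
      simp only [← Matrix.mul_assoc]
      rw [trace_mul_comm]
      simp only [← Matrix.mul_assoc]
    have h9 : trace (N * X * Z * diagonal d * Bᵀ) =
        trace ((diagonal d * Bᵀ * N * X) * Z) := by
      have : N * X * Z * diagonal d * Bᵀ = (N * X * Z) * (diagonal d * Bᵀ) := by
        simp only [Matrix.mul_assoc]
      rw [this, trace_mul_comm]
      simp only [Matrix.mul_assoc]
    rw [h6, trace_add, trace_add, h7, h8, h9, add_zero, ← two_mul] at h5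
    exact (mul_eq_zero.1 h5).resolve_left two_ne_zero
  have h1 : diagonal d * Bᵀ * N * X = 0 := by
    rw [Matrix.ext_iff_trace_mul_right]
    intro Z
    rw [htr, Matrix.zero_mul, trace_zero]
  have h2 : diagonal d * Bᵀ * N = 0 := matrix_eq_zero_of_mul_eq_zero hX h1
  have h3 : (N * X) * (A * diagonal d) = 0 := by
    rw [← Matrix.transpose_inj]
    simp only [Matrix.transpose_mul, hNT, diagonal_transpose, Matrix.transpose_zero]
    rw [← h2, hB, Matrix.transpose_mul]
    simp only [Matrix.mul_assoc]
  exact hN0 (matrix_eq_zero_of_mul_eq_zero hX (matrix_eq_zero_of_mul_eq_zero hrow h3))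

theorem mulVecLin_eq_diagMap {F : Type*} [Field F] {I R : ℕ} (A : Fin I → Fin R → F)
    (d : Fin R → F) :
    ((of A : Matrix (Fin I) (Fin R) F) * diagonal d * (of A : Matrix _ _ F)ᵀ).mulVecLin =
      diagMap (fun r i => A i r) d := by
  refine LinearMap.ext fun x => ?_
  rw [mulVecLin_apply, diagMap_apply, ← mulVec_mulVec, ← mulVec_mulVec]
  ext i
  simp only [mulVec, dotProduct, diagonal_apply, of_apply, transpose_apply, Finset.sum_apply,
    Pi.smul_apply, smul_eq_mul, ite_mul, zero_mul, Finset.sum_ite_eq, Finset.mem_univ, if_true]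
  exact Finset.sum_congr rfl fun _ _ => mul_comm _ _

/-- For a matrix `A` with algebraically independent entries, `A D Aᵀ` has rank at
most `I - t` only for the obvious reason that `D` has at most `I - t` nonzero entries. -/
theorem weight_add_le_of_finrank_add_le {F : Type*} [Field F] [CharZero F] {I R t : ℕ}
    (hIR : I ≤ R) (hR : R ≤ t * (t + 1) / 2) (A : Fin I → Fin R → F)
    (hA : AlgebraicIndependent ℚ (fun q : Fin I × Fin R => A q.1 q.2)) (d : Fin R → F)
    (h : Module.finrank F (LinearMap.range (diagMap (fun r i => A i r) d)) + t ≤ I) :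
    weight d + t ≤ I := by
  classical
  have hK := kruskalRankGE_of_algebraicIndependent hIR A hA
  rcases le_total (weight d) I with hw | hw
  · have hli : LinearIndepOn F (fun r i => A i r) {r | d r ≠ 0} := by
      have := hK _ hw
      simpa using this
    have := weight_le_finrank_range_diagMap _ d hli
    omega
  · by_cases hd : d = 0
    · have : weight d = 0 := by simp [weight, hd]
      omega
    exfalso
    have hlt := lt_finrank_range_add hR (of A) hA d hd ?_
    · have hrk : (of A * diagonal d * (of A)ᵀ).rank =
          Module.finrank F (LinearMap.range (diagMap (fun r i => A i r) d)) := by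
        rw [← mulVecLin_eq_diagMap]
        rfl
      omega
    · intro x hx
      -- `I` of the columns on the support of `d` form a basis, and `x` is orthogonal to them
      obtain ⟨S, hS, hSc⟩ := Finset.exists_subset_card_eq hw
      have hli : LinearIndependent F fun r : S => fun i => A i r := hK S hSc.le
      have hspan := hli.span_eq_top_of_card_eq_finrank' (by simp [hSc])
      have hker : LinearMap.ker (dotProductEquiv F (Fin I) x) = ⊤ := by
        rw [eq_top_iff, ← hspan, Submodule.span_le]
        rintro _ ⟨r, rfl⟩
        have hr : d r ≠ 0 := by simpa using hS r.2
        have h1 := congrFun hx r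
        rw [← vecMul_vecMul, vecMul_diagonal] at h1
        have h2 := (mul_eq_zero.1 h1).resolve_right hr
        simpa [vecMul, dotProduct] using h2
      rw [LinearMap.ker_eq_top] at hker
      simpa using hker

/-! ### A permutation lemma -/

section Permutation

variable {F V ι κ : Type*} [Field F] [AddCommGroup V] [Module F V] [FiniteDimensional F V]
  [Fintype ι] [Fintype κ] {K : ℕ}

theorem weight_add_card_le (d : κ → F) (S : Finset κ) (hS : ∀ k ∈ S, d k = 0) :
    weight d + S.card ≤ Fintype.card κ := by
  classical
  unfold weight
  rw [← Finset.card_union_of_disjoint]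
  · exact Finset.card_le_univ _
  · rw [Finset.disjoint_left]
    intro k hk hkS
    simp only [Finset.mem_filter] at hk
    exact hk.2 (hS k hkS)

open Classical in
theorem weight_add_card_zeros (d : ι → F) :
    weight d + (Finset.univ.filter fun r => d r = 0).card = Fintype.card ι := by
  unfold weight
  rw [add_comm, Finset.card_filter_add_card_filter_not]
  simp

/-- Vectors of a family in general position that lie in a proper subspace number at most its
dimension. -/
theorem card_le_finrank_of_mem (hV : Module.finrank F V = K) {c : ι → V}
    (hc : KruskalRankGE F K c) (W : Submodule F V) (hW : W ≠ ⊤) (S : Finset ι)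
    (hS : ∀ r ∈ S, c r ∈ W) : S.card ≤ Module.finrank F W := by
  have hlt : Module.finrank F W < K := hV ▸ Submodule.finrank_lt hW
  by_contra hcon
  push Not at hcon
  obtain ⟨S', hS', hcard⟩ := Finset.exists_subset_card_eq (Nat.succ_le_of_lt hcon)
  have hli : LinearIndependent F fun r : S' => c r := hc S' (by omega)
  have h1 : LinearIndependent F fun r : S' => (⟨c r, hS r (hS' r.2)⟩ : W) :=
    LinearIndependent.of_comp W.subtype hli
  have := h1.fintype_card_le_finrank
  simp only [Fintype.card_coe] at this
  omega

theorem finrank_ker_dual_add_one (hV : Module.finrank F V = K) (f : Module.Dual F V)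
    (hf : f ≠ 0) : Module.finrank F (LinearMap.ker f) + 1 = K := by
  have := Module.Dual.finrank_ker_add_one_of_ne_zero hf
  omega

theorem card_lt_weight_add (hV : Module.finrank F V = K) {c : ι → V}
    (hc : KruskalRankGE F K c) (f : Module.Dual F V) (hf : f ≠ 0) :
    Fintype.card ι + 1 ≤ weight (fun r => f (c r)) + K := by
  classical
  have h1 := weight_add_card_zeros (fun r => f (c r))
  have h2 := card_le_finrank_of_mem hV hc (LinearMap.ker f)
    (by rwa [Ne, LinearMap.ker_eq_top]) (Finset.univ.filter fun r => f (c r) = 0) (by simp)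
  have h3 := finrank_ker_dual_add_one hV f hf
  omega

theorem exists_dual_vanishing (c : κ → V) (S : Finset κ)
    (h : Submodule.span F (c '' (S : Set κ)) ≠ ⊤) :
    ∃ f : Module.Dual F V, f ≠ 0 ∧ (∀ k ∈ S, f (c k) = 0) := by
  obtain ⟨f, hf0, hf⟩ := Submodule.exists_le_ker_of_lt_top _ (lt_top_iff_ne_top.2 h)
  exact ⟨f, hf0, fun k hk => hf (Submodule.subset_span ⟨k, hk, rfl⟩)⟩

theorem finrank_span_image_le (c : κ → V) (S : Finset κ) :
    Module.finrank F (Submodule.span F (c '' (S : Set κ))) ≤ S.card := by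
  classical
  rw [← Finset.coe_image]
  exact (finrank_span_finset_le_card _).trans Finset.card_image_le

theorem finrank_span_image_eq {c : κ → V} {S : Finset κ} (h : LinearIndepOn F c (S : Set κ)) :
    Module.finrank F (Submodule.span F (c '' (S : Set κ))) = S.card := by
  have h2 := finrank_span_eq_card (R := F) (b := fun x : S => c x) h
  rw [Fintype.card_coe] at h2
  rw [← h2, Set.image_eq_range]
  rfl

theorem span_image_ne_top (hV : Module.finrank F V = K) (c : κ → V) (S : Finset κ)
    (hS : S.card < K) : Submodule.span F (c '' (S : Set κ)) ≠ ⊤ := by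
  intro h
  have := finrank_span_image_le (F := F) c S
  rw [h, finrank_top] at this
  omega

/-- The weight comparison forces the second family to have as many members as the first and to be
in general position as well. -/
theorem card_eq_and_kruskalRankGE (hK : 2 ≤ K) (hV : Module.finrank F V = K)
    (hKι : K ≤ Fintype.card ι) (hκ : Fintype.card κ ≤ Fintype.card ι) {c : ι → V} {c₂ : κ → V}
    (hc : KruskalRankGE F K c)
    (h : ∀ f : Module.Dual F V, weight (fun k => f (c₂ k)) + K ≤ Fintype.card ι + 1 →
      weight (fun r => f (c r)) ≤ weight (fun k => f (c₂ k))) :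
    Fintype.card κ = Fintype.card ι ∧ KruskalRankGE F K c₂ := by
  have hge : ∀ f : Module.Dual F V, f ≠ 0 →
      Fintype.card ι + 1 ≤ weight (fun k => f (c₂ k)) + K := by
    intro f hf
    by_contra hcon
    have h1 := h f (by omega)
    have h2 := card_lt_weight_add hV hc f hf
    omega
  have hcard : Fintype.card κ = Fintype.card ι := by
    by_contra hne
    obtain ⟨S, -, hS⟩ := Finset.exists_subset_card_eq
      (s := (Finset.univ : Finset κ)) (n := min (K - 1) (Fintype.card κ)) (by simp)
    obtain ⟨f, hf0, hf⟩ := exists_dual_vanishing (F := F) c₂ S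
      (span_image_ne_top hV c₂ S (by omega))
    have h1 := weight_add_card_le (fun k => f (c₂ k)) S hf
    have h2 := hge f hf0
    omega
  refine ⟨hcard, kruskalRankGE_of_card_eq (by omega) fun S hS => ?_⟩
  have htop : Submodule.span F (c₂ '' (S : Set κ)) = ⊤ := by
    by_contra hne
    obtain ⟨f, hf0, hf⟩ := exists_dual_vanishing (F := F) c₂ S hne
    have h1 := weight_add_card_le (fun k => f (c₂ k)) S hf
    have h2 := hge f hf0
    omega
  refine linearIndependent_of_top_le_span_of_card_eq_finrank (b := fun k : S => c₂ k) ?_ ?_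
  · rw [← htop, Set.image_eq_range]
    exact le_rfl
  · rw [hV, Fintype.card_coe, hS]

open Classical in
/-- The members of the family `c` that lie in the span of the members of `c₂` indexed by `S`. -/
def spanned (F : Type*) [Field F] [Module F V] (c : ι → V) (c₂ : κ → V) (S : Finset κ) :
    Finset ι :=
  Finset.univ.filter fun r => c r ∈ Submodule.span F (c₂ '' (S : Set κ))

theorem mem_spanned {c : ι → V} {c₂ : κ → V} {S : Finset κ} {r : ι} :
    r ∈ spanned F c c₂ S ↔ c r ∈ Submodule.span F (c₂ '' (S : Set κ)) := by
  simp [spanned]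

theorem card_spanned_le (hV : Module.finrank F V = K) {c : ι → V} {c₂ : κ → V}
    (hc : KruskalRankGE F K c) (S : Finset κ) (hS : S.card < K) :
    (spanned F c c₂ S).card ≤ S.card :=
  (card_le_finrank_of_mem hV hc _ (span_image_ne_top hV c₂ S hS) _
    (fun _ hr => mem_spanned.1 hr)).trans (finrank_span_image_le c₂ S)

/-- Every span of `K - 1` members of `c₂` is a hyperplane, and it contains `K - 1` members of `c`. -/
theorem card_spanned_of_card_add_one (hV : Module.finrank F V = K)
    {c : ι → V} {c₂ : κ → V} (hκ : Fintype.card κ = Fintype.card ι)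
    (hc' : KruskalRankGE F K c₂)
    (hc : KruskalRankGE F K c)
    (h : ∀ f : Module.Dual F V, weight (fun k => f (c₂ k)) + K ≤ Fintype.card ι + 1 →
      weight (fun r => f (c r)) ≤ weight (fun k => f (c₂ k)))
    (S : Finset κ) (hS : S.card + 1 = K) : (spanned F c c₂ S).card = S.card := by
  classical
  apply le_antisymm (card_spanned_le hV hc S (by omega))
  obtain ⟨f, hf0, hf⟩ := exists_dual_vanishing (F := F) c₂ S
    (span_image_ne_top hV c₂ S (by omega))
  have hker : Submodule.span F (c₂ '' (S : Set κ)) = LinearMap.ker f := by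
    apply Submodule.eq_of_le_of_finrank_eq
    · rw [Submodule.span_le]
      rintro _ ⟨k, hk, rfl⟩
      exact hf k hk
    · rw [finrank_span_image_eq (hc' S (by omega))]
      have := finrank_ker_dual_add_one hV f hf0
      omega
  have h1 := weight_add_card_le (fun k => f (c₂ k)) S hf
  have h2 := h f (by omega)
  have h3 := weight_add_card_zeros (fun r => f (c r))
  have h4 : spanned F c c₂ S = Finset.univ.filter fun r => f (c r) = 0 := by
    ext r
    simp [mem_spanned, hker]
  rw [h4]
  omega

/-- The spans of `S ∪ {k}` for the various `k ∉ S` meet pairwise in the span of `S`, and counting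
the members of `c` in them shows that the span of `S` contains `|S|` members of `c`. -/
theorem card_spanned_step (hV : Module.finrank F V = K)
    {c : ι → V} {c₂ : κ → V} (hκ : Fintype.card κ = Fintype.card ι) (hKι : K ≤ Fintype.card ι)
    (hc' : KruskalRankGE F K c₂) (hc : KruskalRankGE F K c) (j : ℕ) (hj : j + 2 ≤ K)
    (ih : ∀ S : Finset κ, S.card = j + 1 → (spanned F c c₂ S).card = j + 1)
    (S : Finset κ) (hS : S.card = j) : (spanned F c c₂ S).card = j := by
  classical
  have hle := card_spanned_le (c₂ := c₂) hV hc S (by omega)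
  have hmono : ∀ k, spanned F c c₂ S ⊆ spanned F c c₂ (insert k S) := by
    intro k r hr
    rw [mem_spanned] at hr ⊢
    exact Submodule.span_mono (Set.image_mono (by simp)) hr
  have hdisj : (↑(Sᶜ) : Set κ).PairwiseDisjoint
      fun k => spanned F c c₂ (insert k S) \ spanned F c c₂ S := by
    intro k hk l hl hkl
    rw [Function.onFun, Finset.disjoint_left]
    intro r hr hr'
    rw [Finset.mem_sdiff, mem_spanned, mem_spanned] at hr hr'
    apply hr.2
    have hk : k ∉ S := by simpa using hk
    have hl : l ∉ S := by simpa using hl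
    have hli : LinearIndepOn F c₂ (insert k ((insert l S : Finset κ) : Set κ)) := by
      rw [← Finset.coe_insert]
      apply hc'
      rw [Finset.card_insert_of_notMem (by simp [hk, hkl]), Finset.card_insert_of_notMem hl]
      omega
    have hnot := hli.notMem_span_of_insert (by simp [hk, hkl])
    obtain ⟨hr1, -⟩ := hr
    rw [Finset.coe_insert, Set.image_insert_eq, Submodule.mem_span_insert] at hr1
    obtain ⟨α, z, hz, hrz⟩ := hr1
    by_cases hα : α = 0
    · rw [hrz, hα, zero_smul, zero_add]
      exact hz
    · refine absurd ?_ hnot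
      have hz' : z ∈ Submodule.span F (c₂ '' ((insert l S : Finset κ) : Set κ)) :=
        Submodule.span_mono (Set.image_mono (by simp)) hz
      have h1 : c₂ k = α⁻¹ • (c r - z) := by
        rw [hrz, add_sub_cancel_right, smul_smul, inv_mul_cancel₀ hα, one_smul]
      rw [h1]
      exact Submodule.smul_mem _ _ (Submodule.sub_mem _ hr'.1 hz')
  have hsum : ∑ k ∈ Sᶜ, (spanned F c c₂ (insert k S) \ spanned F c c₂ S).card +
      (spanned F c c₂ S).card ≤ Fintype.card ι := by
    rw [← Finset.card_biUnion hdisj, ← Finset.card_union_of_disjoint]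
    · exact Finset.card_le_univ _
    · rw [Finset.disjoint_left]
      intro r hr
      rw [Finset.mem_biUnion] at hr
      obtain ⟨k, -, hk⟩ := hr
      exact (Finset.mem_sdiff.1 hk).2
  have hterm : ∀ k ∈ Sᶜ, (spanned F c c₂ (insert k S) \ spanned F c c₂ S).card =
      j + 1 - (spanned F c c₂ S).card := by
    intro k hk
    rw [Finset.card_sdiff_of_subset (hmono k), ih]
    rw [Finset.card_insert_of_notMem (by simpa using hk), hS]
  rw [Finset.sum_congr rfl hterm, Finset.sum_const, Finset.card_compl, hS, smul_eq_mul] at hsum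
  generalize (spanned F c c₂ S).card = n at *
  by_contra hne
  obtain ⟨e, rfl⟩ : ∃ e, j = n + 1 + e := ⟨j - n - 1, by omega⟩
  obtain ⟨m, hm⟩ : ∃ m, Fintype.card κ = n + 1 + e + 2 + m :=
    ⟨Fintype.card κ - (n + 1 + e + 2), by omega⟩
  have e1 : Fintype.card κ - (n + 1 + e) = 2 + m := by omega
  have e2 : n + 1 + e + 1 - n = e + 2 := by omega
  rw [e1, e2, ← hκ, hm] at hsum
  nlinarith

theorem card_spanned (hV : Module.finrank F V = K)
    {c : ι → V} {c₂ : κ → V} (hκ : Fintype.card κ = Fintype.card ι) (hKι : K ≤ Fintype.card ι)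
    (hc' : KruskalRankGE F K c₂) (hc : KruskalRankGE F K c)
    (h : ∀ f : Module.Dual F V, weight (fun k => f (c₂ k)) + K ≤ Fintype.card ι + 1 →
      weight (fun r => f (c r)) ≤ weight (fun k => f (c₂ k))) :
    ∀ (i : ℕ) (S : Finset κ), S.card + 1 + i = K → (spanned F c c₂ S).card = S.card := by
  intro i
  induction i with
  | zero => exact fun S hS => card_spanned_of_card_add_one hV hκ hc' hc h S hS
  | succ i ih =>
    intro S hS
    refine card_spanned_step hV hκ hKι hc' hc S.card (by omega) (fun S' hS' => ?_) S rfl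
    rw [← hS', ih S' (by omega)]

/-- Kruskal's permutation lemma for a family in general position: if every functional that vanishes
on many members of `c₂` vanishes on at least as many members of `c`, then the two
families agree up to order and scaling. -/
theorem exists_equiv_smul (hK : 2 ≤ K) (hV : Module.finrank F V = K)
    (hKι : K ≤ Fintype.card ι) (hκ : Fintype.card κ ≤ Fintype.card ι) {c : ι → V} {c₂ : κ → V}
    (hc : KruskalRankGE F K c)
    (h : ∀ f : Module.Dual F V, weight (fun k => f (c₂ k)) + K ≤ Fintype.card ι + 1 →
      weight (fun r => f (c r)) ≤ weight (fun k => f (c₂ k))) :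
    ∃ e : κ ≃ ι, ∀ k, ∃ l : F, c₂ k = l • c (e k) := by
  classical
  obtain ⟨hcard, hc'⟩ := card_eq_and_kruskalRankGE hK hV hKι hκ hc h
  have hone : ∀ k, ∃ r, c r ∈ Submodule.span F {c₂ k} := by
    intro k
    have h1 := card_spanned hV hcard hKι hc' hc h (K - 2) {k} (by simp; omega)
    rw [Finset.card_singleton] at h1
    obtain ⟨r, hr⟩ := Finset.card_pos.1 (h1 ▸ one_pos)
    exact ⟨r, by simpa using mem_spanned.1 hr⟩
  choose g hg using hone
  have hc0 : ∀ r, c r ≠ 0 := fun r =>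
    (hc {r} (by simp; omega)).ne_zero (by simp)
  have hl : ∀ k, ∃ l : F, l ≠ 0 ∧ c₂ k = l • c (g k) := by
    intro k
    obtain ⟨l, hl⟩ := Submodule.mem_span_singleton.1 (hg k)
    have hl0 : l ≠ 0 := by
      rintro rfl
      exact hc0 (g k) (by simpa using hl.symm)
    exact ⟨l⁻¹, inv_ne_zero hl0, by rw [← hl, smul_smul, inv_mul_cancel₀ hl0, one_smul]⟩
  have hinj : Function.Injective g := by
    intro k k' hkk
    by_contra hne
    have hli : LinearIndepOn F c₂ (({k, k'} : Finset κ) : Set κ) :=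
      hc' _ (by rw [Finset.card_pair hne]; omega)
    obtain ⟨l, hl0, hl1⟩ := hl k
    obtain ⟨l', hl0', hl1'⟩ := hl k'
    have hnm := hli.notMem_span (i := k) (by simp)
    apply hnm
    have hk' : c₂ k' ∈ c₂ '' ((({k, k'} : Finset κ) : Set κ) \ {k}) :=
      ⟨k', by simp [Ne.symm hne], rfl⟩
    have h2 : c₂ k = (l * l'⁻¹) • c₂ k' := by
      rw [hl1', hl1, hkk, smul_smul, mul_assoc, inv_mul_cancel₀ hl0', mul_one]
    rw [h2]
    exact Submodule.smul_mem _ _ (Submodule.subset_span hk')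
  have hbij : Function.Bijective g := (Fintype.bijective_iff_injective_and_card g).2 ⟨hinj, hcard⟩
  exact ⟨Equiv.ofBijective g hbij, fun k => (hl k).imp fun l hl => hl.2⟩

end Permutation

/-! ### Uniqueness of the decomposition -/

section Uniqueness

variable {F ι κ : Type*} [Field F] [Fintype ι] [Fintype κ]

/-- For a family in general position in a `K`-dimensional space, any set of members whose complement
has `K - 1` elements is exactly the set on which some functional does not vanish. -/
theorem exists_dual_support {V : Type*} [AddCommGroup V] [Module F V] [FiniteDimensional F V]
    {K ρ : ℕ} (hV : Module.finrank F V = K) {c : ι → V} (hc : KruskalRankGE F K c)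
    (hρ : Fintype.card ι + 1 = K + ρ) (hK : 0 < K) (S : Finset ι) (hS : S.card = ρ) :
    ∃ f : Module.Dual F V, ∀ r, f (c r) ≠ 0 ↔ r ∈ S := by
  classical
  have hcard : (Sᶜ).card < K := by
    rw [Finset.card_compl]
    omega
  obtain ⟨f, hf0, hf⟩ := exists_dual_vanishing (F := F) c Sᶜ (span_image_ne_top hV c _ hcard)
  have h1 := card_lt_weight_add hV hc f hf0
  have hsub : (Finset.univ.filter fun r => f (c r) ≠ 0) ⊆ S := by
    intro r hr
    by_contra hrS
    exact (Finset.mem_filter.1 hr).2 (hf r (by simpa using hrS))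
  have heq := Finset.eq_of_subset_of_card_le hsub (by simp only [weight] at h1; omega)
  refine ⟨f, fun r => ?_⟩
  rw [← heq]
  simp

/-- A vector in the span of an independent family has zero coefficient at each member that can be
left out of the span. -/
theorem exists_eq_smul_of_mem_span_erase {V : Type*} [AddCommGroup V] [Module F V]
    [DecidableEq ι] {a : ι → V} {T : Finset ι} (hT : LinearIndepOn F a (T : Set ι)) {q : ι}
    (hq : q ∈ T) {v : V} (hv : v ∈ Submodule.span F (a '' (T : Set ι)))
    (h : ∀ u ∈ T, u ≠ q → v ∈ Submodule.span F (a '' ((T.erase u : Finset ι) : Set ι))) :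
    ∃ μ : F, v = μ • a q := by
  obtain ⟨x, hx⟩ : ∃ x : ι → F, ∑ r ∈ T, x r • a r = v := by
    obtain ⟨y, hy⟩ := (Submodule.mem_span_image_finset_iff_exists_fun F).1 hv
    refine ⟨fun r => if hr : r ∈ T then y ⟨r, hr⟩ else 0, ?_⟩
    rw [← hy, ← Finset.sum_coe_sort]
    simp
  have hx0 : ∀ u ∈ T, u ≠ q → x u = 0 := by
    intro u hu huq
    by_contra hxu
    apply hT.notMem_span (i := u) (by simpa using hu)
    rw [← Finset.coe_erase]
    have h1 : a u = (x u)⁻¹ • (v - ∑ r ∈ T.erase u, x r • a r) := by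
      rw [← hx, ← Finset.add_sum_erase T _ hu, add_sub_cancel_right, smul_smul,
        inv_mul_cancel₀ hxu, one_smul]
    rw [h1]
    refine Submodule.smul_mem _ _ (Submodule.sub_mem _ (h u hu huq) (Submodule.sum_mem _ ?_))
    intro r hr
    exact Submodule.smul_mem _ _ (Submodule.subset_span ⟨r, hr, rfl⟩)
  refine ⟨x q, ?_⟩
  rw [← hx, Finset.sum_eq_single_of_mem q hq]
  intro u hu huq
  rw [hx0 u hu huq, zero_smul]

/-- If a combination of the matrices `a r (a r)ᵀ` has rank at most `ρ` only when it has at most `ρ`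
nonzero coefficients, then every decomposition with at most as many terms has the same rank-1
terms.
The weight hypothesis compares the numbers of nonvanishing `f (c r)` and `f (c₂ k)`, so the
permutation lemma matches `c₂` with `c`. For a functional `f` supported on a set `S` of `ρ` members
of `c`, the range of the common slice is the span both of the `a r` and of the matching `a₂ k`;
intersecting these spans over the `S` that contain a given index matches `a₂` with `a`. -/
theorem exists_equiv_terms {n K ρ : ℕ} {a : ι → Fin n → F} {c : ι → Fin K → F}
    {a₂ : κ → Fin n → F} {c₂ : κ → Fin K → F} (hK : 2 ≤ K) (hρ : Fintype.card ι + 1 = K + ρ)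
    (hρ1 : 1 ≤ ρ) (hρn : ρ + 1 ≤ n) (hn : n ≤ Fintype.card ι)
    (hκ : Fintype.card κ ≤ Fintype.card ι)
    (ha : KruskalRankGE F n a) (hc : KruskalRankGE F K c)
    (hG : ∀ d : ι → F, Module.finrank F (LinearMap.range (diagMap a d)) ≤ ρ → weight d ≤ ρ)
    (heq : ∀ f : Module.Dual F (Fin K → F),
      diagMap a (fun r => f (c r)) = diagMap a₂ (fun k => f (c₂ k))) :
    ∃ e : κ ≃ ι, ∀ k, ∃ l m : F, c₂ k = l • c (e k) ∧ a₂ k = m • a (e k) ∧ l * m ^ 2 = 1 := by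
  classical
  have hV : Module.finrank F (Fin K → F) = K := by simp
  obtain ⟨e, he⟩ := exists_equiv_smul (c₂ := c₂) hK hV (by omega) hκ hc (by
    intro f hf
    have h1 := finrank_range_diagMap_le a₂ (fun k => f (c₂ k))
    rw [← heq f] at h1
    have h2 := hG _ (h1.trans (by omega))
    refine le_trans (weight_le_finrank_range_diagMap a _ ?_) h1
    have h3 := ha (Finset.univ.filter fun r => f (c r) ≠ 0) (by simp only [weight] at h2; omega)
    simpa using h3)
  choose l hl using he
  have hspan : ∀ (S : Finset ι), S.card = ρ → ∀ k, e k ∈ S →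
      a₂ k ∈ Submodule.span F (a '' (S : Set ι)) := by
    intro S hS k hk
    obtain ⟨f, hf⟩ := exists_dual_support hV hc hρ (by omega) S hS
    have hsupp : {r | f (c r) ≠ 0} = (S : Set ι) := by
      ext r
      simpa using hf r
    have hli : LinearIndepOn F a (S : Set ι) := ha S (by omega)
    have h1 : Submodule.span F (a '' (S : Set ι)) ≤
        Submodule.span F (a₂ '' ((S.map e.symm.toEmbedding : Finset κ) : Set κ)) := by
      rw [Submodule.span_le]
      rintro _ ⟨r, hr, rfl⟩
      have h2 := mem_range_diagMap a (fun r => f (c r)) (by rw [hsupp]; exact hli)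
        ((hf r).2 hr)
      rw [heq f] at h2
      refine Submodule.span_mono (Set.image_mono ?_) (range_diagMap_le _ _ h2)
      intro k' hk'
      have h3 : f (c (e k')) ≠ 0 := by
        intro h0
        apply hk'
        rw [hl k', map_smul, h0, smul_zero]
      rw [Finset.coe_map]
      exact ⟨e k', (hf _).1 h3, by simp⟩
    have h2 := Submodule.eq_of_le_of_finrank_le h1 (by
      rw [finrank_span_image_eq hli]
      exact (finrank_span_image_le _ _).trans (by rw [Finset.card_map]))
    rw [h2]
    refine Submodule.subset_span ⟨k, ?_, rfl⟩
    rw [Finset.coe_map]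
    exact ⟨e k, hk, by simp⟩
  have hm : ∀ k, ∃ m : F, a₂ k = m • a (e k) := by
    intro k
    obtain ⟨T, hT, hTc⟩ := Finset.exists_superset_card_eq (s := {e k}) (n := ρ + 1)
      (by simp) (by omega)
    have hkT : e k ∈ T := hT (by simp)
    have hmem : ∀ u ∈ T, u ≠ e k →
        a₂ k ∈ Submodule.span F (a '' ((T.erase u : Finset ι) : Set ι)) := by
      intro u hu huk
      refine hspan _ ?_ k (Finset.mem_erase.2 ⟨huk.symm, hkT⟩)
      rw [Finset.card_erase_of_mem hu, hTc, Nat.add_sub_cancel]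
    obtain ⟨u, hu, huk⟩ := Finset.exists_mem_ne (s := T) (by omega) (e k)
    exact exists_eq_smul_of_mem_span_erase (ha T (by omega)) hkT
      (Submodule.span_mono (Set.image_mono (by simp)) (hmem u hu huk)) hmem
  choose m hm using hm
  refine ⟨e, fun k => ⟨l k, m k, hl k, hm k, ?_⟩⟩
  by_contra hne
  obtain ⟨S, hS, hSc⟩ := Finset.exists_superset_card_eq (s := {e k}) (n := ρ)
    (by simpa using hρ1) (by omega)
  obtain ⟨f, hf⟩ := exists_dual_support hV hc hρ (by omega) S hSc
  set d : ι → F := fun r => f (c r) * (1 - l (e.symm r) * m (e.symm r) ^ 2) with hd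
  have hd0 : diagMap a d = 0 := by
    have h1 := heq f
    refine LinearMap.ext fun x => ?_
    have h2 := congrArg (fun g => g x) h1
    simp only [diagMap_apply] at h2
    rw [← e.symm.sum_comp] at h2
    rw [diagMap_apply, LinearMap.zero_apply, ← sub_eq_zero.2 h2, ← Finset.sum_sub_distrib]
    refine Finset.sum_congr rfl fun r _ => ?_
    rw [hl, hm, e.apply_symm_apply, map_smul, smul_dotProduct, smul_smul, ← sub_smul]
    congr 1
    simp only [hd, smul_eq_mul]
    ring
  have hdk : d (e k) ≠ 0 := by
    refine mul_ne_zero ((hf _).2 (hS (by simp))) ?_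
    rw [e.symm_apply_apply]
    exact sub_ne_zero.2 (Ne.symm hne)
  have hsub : {r | d r ≠ 0} ⊆ (S : Set ι) := fun r hr => (hf r).1 (left_ne_zero_of_mul hr)
  have hli : LinearIndepOn F a (S : Set ι) := ha S (by omega)
  have h1 := mem_range_diagMap a d (hli.mono hsub) hdk
  rw [hd0, LinearMap.range_zero, Submodule.mem_bot] at h1
  exact hli.ne_zero (hS (by simp)) h1

end Uniqueness

/-- The matrix `∑ r, (w ⬝ c r) • a r (a r)ᵀ` is the combination with coefficients `w` of the frontal
slices of the tensor `∑ r, a r ∘ a r ∘ c r`. -/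
theorem diagMap_dotProduct_apply {F ι : Type*} [Field F] [Fintype ι] {n K : ℕ}
    (a : ι → Fin n → F) (c : ι → Fin K → F) (w : Fin K → F) (x : Fin n → F) (i : Fin n) :
    diagMap a (fun r => dotProductEquiv F (Fin K) w (c r)) x i =
      ∑ j, ∑ k, (∑ r, a r i * a r j * c r k) * (w k * x j) := by
  simp only [diagMap_apply, Finset.sum_apply, Pi.smul_apply, smul_eq_mul,
    dotProductEquiv_apply_apply, dotProduct, Finset.sum_mul, Finset.mul_sum]
  rw [Finset.sum_comm]
  refine Finset.sum_congr rfl fun j _ => ?_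
  rw [Finset.sum_comm]
  refine Finset.sum_congr rfl fun k _ => Finset.sum_congr rfl fun r _ => ?_
  ring

/-- Two decompositions of the same tensor give the same combinations of frontal slices. -/
theorem diagMap_eq_of_sum_eq {F ι κ : Type*} [Field F] [Fintype ι] [Fintype κ] {n K : ℕ}
    {a : ι → Fin n → F} {c : ι → Fin K → F} {a₂ : κ → Fin n → F} {c₂ : κ → Fin K → F}
    (h : ∀ i j k, ∑ r, a r i * a r j * c r k = ∑ r, a₂ r i * a₂ r j * c₂ r k)
    (f : Module.Dual F (Fin K → F)) :
    diagMap a (fun r => f (c r)) = diagMap a₂ (fun k => f (c₂ k)) := by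
  obtain ⟨w, rfl⟩ := (dotProductEquiv F (Fin K)).surjective f
  refine LinearMap.ext fun x => funext fun i => ?_
  rw [diagMap_dotProduct_apply, diagMap_dotProduct_apply]
  simp only [h]

/-- The hypothesis on `R` in arithmetic form, with `t = I + K - R - 1`. -/
theorem exists_corank {I K R : ℕ} (hI : 2 ≤ I) (hIK : I ≤ K) (hKR : K ≤ R)
    (hR : (R : ℝ) ≤
      (2 * (I : ℝ) + 2 * (K : ℝ) + 1 - Real.sqrt (8 * (K : ℝ) + 8 * (I : ℝ) + 1)) / 2) :
    ∃ t, R + 1 + t = I + K ∧ R ≤ t * (t + 1) / 2 ∧ 2 ≤ t := by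
  have h0 : 3 ≤ Real.sqrt (8 * (K : ℝ) + 8 * (I : ℝ) + 1) := by
    apply Real.le_sqrt_of_sq_le
    have : (2 : ℝ) ≤ I := by exact_mod_cast hI
    have : (I : ℝ) ≤ K := by exact_mod_cast hIK
    linarith
  have h1 : R + 1 ≤ I + K := by
    have : (R : ℝ) + 1 ≤ I + K := by linarith
    exact_mod_cast this
  obtain ⟨t, ht⟩ := Nat.exists_eq_add_of_le h1
  have htR : (I : ℝ) + K = R + 1 + t := by exact_mod_cast ht
  have h2 : Real.sqrt (8 * (K : ℝ) + 8 * (I : ℝ) + 1) ≤ 2 * t + 3 := by linarith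
  rw [Real.sqrt_le_left (by positivity)] at h2
  have h3 : 2 * (R : ℝ) ≤ t * (t + 1) := by nlinarith
  have h4 : 2 * R ≤ t * (t + 1) := by exact_mod_cast h3
  refine ⟨t, ht.symm, by omega, ?_⟩
  by_contra hlt
  have : t ≤ 1 := by omega
  interval_cases t <;> omega

/-- Any decomposition with the minimal number of terms has the same terms as the one given by `A` and
`C`, hence any two of them have the same terms. -/
theorem sfsCPDUnique_of_algebraicIndependent {F : Type*} [Field F] [CharZero F] {I K R t : ℕ}
    (hI : 2 ≤ I) (hIK : I ≤ K) (hKR : K ≤ R) (ht : R + 1 + t = I + K)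
    (hR : R ≤ t * (t + 1) / 2) (ht2 : 2 ≤ t) (A : Fin I → Fin R → F) (C : Fin K → Fin R → F)
    (hA : AlgebraicIndependent ℚ (fun q : Fin I × Fin R => A q.1 q.2))
    (hC : AlgebraicIndependent ℚ (fun q : Fin K × Fin R => C q.1 q.2)) :
    SfsCPDUnique (sfsSum A C) := by
  have ha := kruskalRankGE_of_algebraicIndependent (hIK.trans hKR) A hA
  have hc := kruskalRankGE_of_algebraicIndependent hKR C hC
  have hle : sfsRank (sfsSum A C) ≤ R := by
    refine Nat.sInf_le ⟨fun r i => A i r, fun r k => C k r, fun r => ?_, fun r => ?_,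
      fun i j k => rfl⟩
    · exact (ha {r} (by simp; omega)).ne_zero (i := r) (by simp)
    · exact (hc {r} (by simp; omega)).ne_zero (i := r) (by simp)
  have key : ∀ (a : Fin (sfsRank (sfsSum A C)) → Fin I → F)
      (c : Fin (sfsRank (sfsSum A C)) → Fin K → F),
      IsSfsPD (sfsSum A C) (sfsRank (sfsSum A C)) a c →
      ∃ e : Fin (sfsRank (sfsSum A C)) ≃ Fin R, ∀ r i j k,
        a r i * a r j * c r k = A i (e r) * A j (e r) * C k (e r) := by
    intro a c h
    obtain ⟨e, he⟩ := exists_equiv_terms (ρ := I - t) (a₂ := a) (c₂ := c)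
      (by omega) (by simp; omega) (by omega) (by omega) (by simp; omega)
      (by simpa using hle) ha hc
      (fun d hd => by
        have := weight_add_le_of_finrank_add_le (t := t) (by omega) hR A hA d (by omega)
        omega)
      (diagMap_eq_of_sum_eq fun i j k => h.2.2 i j k)
    refine ⟨e, fun r i j k => ?_⟩
    obtain ⟨l, m, hl, hm, hlm⟩ := he r
    rw [hl, hm]
    simp only [Pi.smul_apply, smul_eq_mul]
    linear_combination A i (e r) * A j (e r) * C k (e r) * hlm
  intro a a₂ c c₂ h h'
  obtain ⟨e, he⟩ := key a c h
  obtain ⟨e', he'⟩ := key a₂ c₂ h'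
  refine ⟨e.trans e'.symm, fun r i j k => ?_⟩
  rw [he, he']
  simp

theorem sfsGenericallyUnique {F : Type*} [RCLike F] [MeasureSpace F] [BorelSpace F]
    [SigmaFinite (volume : Measure F)] [NullSingletonClass (volume : Measure F)] {I K R t : ℕ}
    (hI : 2 ≤ I) (hIK : I ≤ K) (hKR : K ≤ R) (ht : R + 1 + t = I + K)
    (hR : R ≤ t * (t + 1) / 2) (ht2 : 2 ≤ t) : SFSGenericallyUnique F I K R := by
  have h1 := (Measure.quasiMeasurePreserving_fst (μ := (volume : Measure (Fin I → Fin R → F)))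
    (ν := (volume : Measure (Fin K → Fin R → F)))).ae
    (ae_algebraicIndependent (F := F) I R)
  have h2 := (Measure.quasiMeasurePreserving_snd (μ := (volume : Measure (Fin I → Fin R → F)))
    (ν := (volume : Measure (Fin K → Fin R → F)))).ae
    (ae_algebraicIndependent (F := F) K R)
  have h3 : ∀ᵐ p : (Fin I → Fin R → F) × (Fin K → Fin R → F), SfsCPDUnique (sfsSum p.1 p.2) := by
    rw [Measure.volume_eq_prod]
    filter_upwards [h1, h2] with p hp1 hp2
    exact sfsCPDUnique_of_algebraicIndependent hI hIK hKR ht hR ht2 p.1 p.2 hp1 hp2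
  exact ae_iff.1 h3

/-- If `2 ≤ I ≤ K ≤ R` and `R ≤ (2I + 2K + 1 − √(8K + 8I + 1))/2`, then
for `F = ℝ` and `F = ℂ` the SFS-CPD of an `I×I×K` SFS-tensor of SFS-rank `R` is
generically unique. -/
theorem statement3 (I K R : ℕ) (hI : 2 ≤ I) (hIK : I ≤ K) (hKR : K ≤ R)
    (hR : (R : ℝ) ≤
      (2 * (I : ℝ) + 2 * (K : ℝ) + 1 - Real.sqrt (8 * (K : ℝ) + 8 * (I : ℝ) + 1)) / 2) :
    SFSGenericallyUnique ℝ I K R ∧ SFSGenericallyUnique ℂ I K R := by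
  obtain ⟨t, ht, hRt, ht2⟩ := exists_corank hI hIK hKR hR
  exact ⟨sfsGenericallyUnique hI hIK hKR ht hRt ht2, sfsGenericallyUnique hI hIK hKR ht hRt ht2⟩
end
end

section
/- Let I, K, R be integers with 2 ≤ K ≤ I ≤ R and R ≤ (K + 3I − 1 − √((K−I)² + 2K + 6I − 3))/2. Then, for F = ℝ and for F = ℂ, the SFS-CPD of an I×I×K SFS-tensor of SFS-rank R is generically unique. -/
/-!
Put `m = R - I + 1`, `u = 2I - R - 1`, `v = I + K - R - 1`; the hypothesis on `R` says exactly that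
`u, v > 0` and `u v ≥ R`.

**Deterministic part.** Suppose that any `I` columns of `A` and any `K` columns of `C` are linearly
independent, and that every combination `Σ d_r a_r c_rᵀ` with at least `I` nonzero weights has
rank `> m`. Then any combination of rank `w ≤ m` has at most `w` nonzero weights
(`support_le_rank`). If `[A,A,C]_R = [B,B,C']_{R'}` with `R' ≤ R`, contracting the second mode with
`x` gives `Σ (x·a_r) a_r c_rᵀ = Σ (x·b_r) b_r c'_rᵀ`, so whenever at most `m` of the `x·b_r` are
nonzero, at most as many of the `x·a_r` are. By Kruskal's permutation lemma
(`kruskal_permutation`) `R' = R` and the `b_r` are, up to order and scaling, the `a_r`. Since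
`R < 2I`, the matrices `a_r a_rᵀ` are linearly independent (`GenPos.khatriRao`), so the `c_r` agree
as well.

**Generic part.** The assumptions fail only on a null set: each exceptional set is covered by
finitely many images of differentiable maps from spaces of smaller dimension
(`measure_range_eq_zero`). The rank condition is the one that matters. If `Σ d_r a_r c_rᵀ` has rank
`≤ m`, there is a `u × I` matrix `L` with an identity block such that `L A D(d) Cᵀ = 0`. Normalising
one entry of `d` to `1`, the pair `(L, d)` has `u m + (R - 1)` parameters. As `d` has at least `I`
nonzero entries, `L A D(d)` has rank `u`, so this imposes `u K` independent linear conditions on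
`C`; and `u m + R - 1 < u K` because `K - m = v`.
-/

open MeasureTheory

noncomputable section

/-! ### Vectors in general position -/

/-- Vectors `a_1, …, a_R` in `F^n` are in general position: no nonzero linear form vanishes on `n` of
them. For `n ≤ R` this says that any `n` of them are linearly independent. -/
def GenPos {F : Type*} [Field F] {n R : ℕ} (a : Fin R → Fin n → F) : Prop :=
  ∀ x : Fin n → F, x ≠ 0 → {r | x ⬝ᵥ a r = 0}.ncard < n

section Deterministic

variable {F : Type*} [Field F]

theorem exists_annihilator {n R : ℕ} (a : Fin R → Fin n → F) (S : Finset (Fin R))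
    (hS : S.card < n) : ∃ x : Fin n → F, x ≠ 0 ∧ ∀ r ∈ S, x ⬝ᵥ a r = 0 := by
  let f : (Fin n → F) →ₗ[F] (S → F) := LinearMap.pi fun r =>
    { toFun := fun x => x ⬝ᵥ a r
      map_add' := fun x y => add_dotProduct x y _
      map_smul' := fun c x => smul_dotProduct c x _ }
  have hk : LinearMap.ker f ≠ ⊥ := LinearMap.ker_ne_bot_of_finrank_lt (by simpa using hS)
  obtain ⟨x, hx, hx0⟩ := Submodule.exists_mem_ne_zero_of_ne_bot hk
  refine ⟨x, hx0, fun r hr => ?_⟩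
  have := congrFun (LinearMap.mem_ker.1 hx) ⟨r, hr⟩
  simpa [f] using this

theorem GenPos.eq_zero {n R : ℕ} {a : Fin R → Fin n → F} (ha : GenPos a) {x : Fin n → F}
    (S : Finset (Fin R)) (hS : n ≤ S.card) (h : ∀ r ∈ S, x ⬝ᵥ a r = 0) : x = 0 := by
  by_contra hx
  have h1 := ha x hx
  have h2 : (S : Set (Fin R)).ncard ≤ {r | x ⬝ᵥ a r = 0}.ncard :=
    Set.ncard_le_ncard (fun r hr => h r hr) (Set.toFinite _)
  rw [Set.ncard_coe_finset] at h2
  omega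

/-- Fewer than `n` vectors together with one more are linearly independent, hence a linear form
vanishes on the former and takes the value `1` on the latter. -/
theorem GenPos.exists_dual {n R : ℕ} {a : Fin R → Fin n → F} (ha : GenPos a) (hnR : n ≤ R)
    (S : Finset (Fin R)) (hS : S.card < n) (s : Fin R) (hs : s ∉ S) :
    ∃ x : Fin n → F, (∀ r ∈ S, x ⬝ᵥ a r = 0) ∧ x ⬝ᵥ a s = 1 := by
  obtain ⟨S', h1, h2, h3⟩ := Finset.exists_subsuperset_card_eq (s := S)
    (t := Finset.univ.erase s) (n := n - 1)
    (fun r hr => by simp; rintro rfl; exact hs hr) (by omega)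
    (by rw [Finset.card_erase_of_mem (Finset.mem_univ _)]; simp; omega)
  obtain ⟨x, hx0, hx⟩ := exists_annihilator a S' (by omega)
  have hsS : s ∉ S' := fun h => by simpa using h2 h
  have hxs : x ⬝ᵥ a s ≠ 0 := by
    intro h
    refine hx0 (ha.eq_zero (insert s S') ?_ ?_)
    · rw [Finset.card_insert_of_notMem hsS]; omega
    · intro r hr
      rcases Finset.mem_insert.1 hr with rfl | hr
      · exact h
      · exact hx r hr
  refine ⟨(x ⬝ᵥ a s)⁻¹ • x, fun r hr => ?_, ?_⟩
  · rw [smul_dotProduct, hx r (h1 hr), smul_zero]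
  · rw [smul_dotProduct, smul_eq_mul, inv_mul_cancel₀ hxs]

/-- The matrices `a_r a_rᵀ` are linearly independent if `R < 2n`: the indices other than `s` split
into two sets of fewer than `n` elements; pairing with linear forms that vanish on one part each and
take the value `1` at `a_s` isolates the coefficient `δ s`. -/
theorem GenPos.khatriRao {n R : ℕ} {a : Fin R → Fin n → F} (ha : GenPos a) (hnR : n ≤ R)
    (hR : R < 2 * n) (δ : Fin R → F) (h : ∀ i j, ∑ r, a r i * a r j * δ r = 0) : δ = 0 := by
  classical
  funext s
  have hc : (Finset.univ.erase s : Finset (Fin R)).card = R - 1 := by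
    rw [Finset.card_erase_of_mem (Finset.mem_univ _)]; simp
  obtain ⟨S, hS, hScard⟩ := Finset.exists_subset_card_eq (s := Finset.univ.erase s) (n := n - 1)
    (by omega)
  have hsS : s ∉ S := fun h => by simpa using hS h
  obtain ⟨x, hx, hxs⟩ := ha.exists_dual hnR S (by omega) s hsS
  obtain ⟨y, hy, hys⟩ := ha.exists_dual hnR (Finset.univ.erase s \ S)
    (by rw [Finset.card_sdiff_of_subset hS]; omega) s (by simp)
  have key : ∑ r, (x ⬝ᵥ a r) * (y ⬝ᵥ a r) * δ r = 0 := by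
    calc ∑ r, (x ⬝ᵥ a r) * (y ⬝ᵥ a r) * δ r
        = ∑ r, ∑ i, ∑ j, x i * y j * (a r i * a r j * δ r) := by
          refine Finset.sum_congr rfl fun r _ => ?_
          simp only [dotProduct, Finset.sum_mul, Finset.mul_sum]
          rw [Finset.sum_comm]
          refine Finset.sum_congr rfl fun i _ => Finset.sum_congr rfl fun j _ => by ring
      _ = ∑ i, ∑ j, x i * y j * ∑ r, (a r i * a r j * δ r) := by
          rw [Finset.sum_comm]
          refine Finset.sum_congr rfl fun i _ => ?_
          rw [Finset.sum_comm]
          refine Finset.sum_congr rfl fun j _ => by rw [Finset.mul_sum]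
      _ = 0 := by simp [h]
  rw [Finset.sum_eq_single s] at key
  · simpa [hxs, hys] using key
  · intro r _ hr
    by_cases hrS : r ∈ S
    · simp [hx r hrS]
    · rw [hy r (by simp [hr, hrS])]; simp
  · simp

/-! ### Ranks of combinations of the matrices `a_r c_rᵀ` -/

/-- The matrix `Σ_r d_r a_r c_rᵀ`; the vectors are the rows of `a` and `c`. -/
def sliceMat {I K R : ℕ} (a : Fin R → Fin I → F) (c : Fin R → Fin K → F) (d : Fin R → F) :
    Matrix (Fin I) (Fin K) F :=
  (Matrix.of a).transpose * Matrix.diagonal d * Matrix.of c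

/-- If the weights `d` have support `S` with `w < |S| ≤ I` and `w < K`, linear forms dual to `w + 1`
of the `a_r` and `c_r` (the former vanishing on the rest of `S`) extract an invertible diagonal
block of size `w + 1`. -/
theorem rank_lower {I K R : ℕ} {a : Fin R → Fin I → F} {c : Fin R → Fin K → F}
    (ha : GenPos a) (hc : GenPos c) (hI : I ≤ R) (hK : K ≤ R) (d : Fin R → F) (w : ℕ)
    (S : Finset (Fin R)) (hS : ∀ r, r ∈ S ↔ d r ≠ 0) (hSI : S.card ≤ I) (hw : w < S.card)
    (hwK : w < K) :
    w < (sliceMat a c d).rank := by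
  classical
  obtain ⟨T, hTS, hT⟩ := Finset.exists_subset_card_eq (s := S) (n := w + 1) hw
  have h1 : ∀ s : T, ∃ x : Fin I → F, (∀ r ∈ S.erase s, x ⬝ᵥ a r = 0) ∧ x ⬝ᵥ a s = 1 :=
    fun s => ha.exists_dual hI _ (by
      rw [Finset.card_erase_of_mem (hTS s.2)]; omega) _ (by simp)
  have h2 : ∀ s : T, ∃ x : Fin K → F, (∀ r ∈ T.erase s, x ⬝ᵥ c r = 0) ∧ x ⬝ᵥ c s = 1 :=
    fun s => hc.exists_dual hK _ (by
      rw [Finset.card_erase_of_mem s.2]; omega) _ (by simp)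
  choose φ hφ hφ1 using h1
  choose ψ hψ hψ1 using h2
  set M := sliceMat a c d with hM
  have hA : Matrix.of φ * (Matrix.of a).transpose * Matrix.diagonal d =
      Matrix.of fun (s : T) (r : Fin R) => if r = s then d r else 0 := by
    ext s r
    rw [Matrix.mul_diagonal]
    have : (Matrix.of φ * (Matrix.of a).transpose) s r = φ s ⬝ᵥ a r := rfl
    rw [this]
    simp only [Matrix.of_apply]
    split_ifs with h
    · rw [h, hφ1, one_mul]
    · by_cases hr : d r = 0
      · simp [hr]
      · rw [hφ s r (by simp [h, hS, hr]), zero_mul]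
  have hprod : Matrix.of φ * M * (Matrix.of ψ).transpose =
      Matrix.diagonal fun s : T => d s := by
    have : Matrix.of φ * M * (Matrix.of ψ).transpose =
      (Matrix.of φ * (Matrix.of a).transpose * Matrix.diagonal d) *
        (Matrix.of c * (Matrix.of ψ).transpose) := by
      simp only [hM, sliceMat, Matrix.mul_assoc]
    rw [this, hA]
    ext s t
    rw [Matrix.mul_apply]
    simp only [Matrix.of_apply, ite_mul, zero_mul, Finset.sum_ite_eq', Finset.mem_univ, if_true]
    have e : (Matrix.of c * (Matrix.of ψ).transpose) (s : Fin R) t = ψ t ⬝ᵥ c s := by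
      rw [dotProduct_comm]; rfl
    rw [e]
    by_cases hst : s = t
    · subst hst; simp [hψ1]
    · rw [hψ t s (by simp [hst]), Matrix.diagonal_apply_ne _ hst, mul_zero]
  have hr := Matrix.rank_mul_le_left (Matrix.of φ * M) (Matrix.of ψ).transpose
  have hr' := Matrix.rank_mul_le_right (Matrix.of φ) M
  rw [hprod, Matrix.rank_diagonal] at hr
  have hcard : Fintype.card {i : T // d i ≠ 0} = w + 1 := by
    rw [Fintype.card_of_subtype (Finset.univ : Finset T)]
    · simp [hT]
    · intro x; simpa using (hS x).1 (hTS x.2)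
  omega

/-! ### Kruskal's permutation lemma -/

/-- First half of Kruskal's permutation lemma: the number of vectors agrees, `b` is in general
position too, and a hyperplane containing `I - 1` of the `b_r` contains exactly `I - 1` of the
`a_r`. -/
theorem kruskal_count {I R R' : ℕ} {a : Fin R → Fin I → F} {b : Fin R' → Fin I → F}
    (ha : GenPos a) (hI : 1 ≤ I) (hIR : I ≤ R) (hR' : R' ≤ R)
    (H : ∀ x : Fin I → F, {r | x ⬝ᵥ b r ≠ 0}.ncard ≤ R - I + 1 →
      {r | x ⬝ᵥ a r ≠ 0}.ncard ≤ {r | x ⬝ᵥ b r ≠ 0}.ncard) :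
    R' = R ∧ GenPos b ∧ ∀ x : Fin I → F, x ≠ 0 → I - 1 ≤ {r | x ⬝ᵥ b r = 0}.ncard →
      {r | x ⬝ᵥ a r = 0}.ncard = I - 1 := by
  have ca : ∀ x : Fin I → F, {r | x ⬝ᵥ a r = 0}.ncard + {r | x ⬝ᵥ a r ≠ 0}.ncard = R := by
    intro x
    have := Set.ncard_add_ncard_compl {r | x ⬝ᵥ a r = 0}
    simpa [Set.compl_ofPred] using this
  have cb : ∀ x : Fin I → F, {r | x ⬝ᵥ b r = 0}.ncard + {r | x ⬝ᵥ b r ≠ 0}.ncard = R' := by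
    intro x
    have := Set.ncard_add_ncard_compl {r | x ⬝ᵥ b r = 0}
    simpa [Set.compl_ofPred] using this
  have step : ∀ x : Fin I → F, x ≠ 0 → I - 1 ≤ {r | x ⬝ᵥ b r = 0}.ncard →
      R' = R ∧ {r | x ⬝ᵥ a r = 0}.ncard = I - 1 ∧ {r | x ⬝ᵥ b r = 0}.ncard = I - 1 := by
    intro x hx hb
    have h1 := ca x
    have h2 := cb x
    have h3 := ha x hx
    have h4 := H x (by omega)
    omega
  -- with fewer vectors `b_r`, some nonzero `x` is orthogonal to all of them, hence to all `a_r`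
  have hIR' : I - 1 ≤ R' := by
    by_contra hlt
    obtain ⟨x, hx0, hx⟩ := exists_annihilator b Finset.univ (by simp; omega)
    have h0 : {r | x ⬝ᵥ b r ≠ 0} = ∅ := by ext r; simp [hx r]
    have h1 := H x (by simp [h0])
    have h2 := ca x
    have h3 := ha x hx0
    rw [h0, Set.ncard_empty] at h1
    omega
  obtain ⟨S, -, hS⟩ := Finset.exists_subset_card_eq
    (s := (Finset.univ : Finset (Fin R'))) (n := I - 1) (by simpa using hIR')
  have hSx : ∀ x : Fin I → F, (∀ r ∈ S, x ⬝ᵥ b r = 0) → I - 1 ≤ {r | x ⬝ᵥ b r = 0}.ncard := by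
    intro x hx
    rw [← hS, ← Set.ncard_coe_finset]
    exact Set.ncard_le_ncard (fun r hr => hx r hr) (Set.toFinite _)
  obtain ⟨x, hx0, hx⟩ := exists_annihilator b S (by omega)
  refine ⟨(step x hx0 (hSx x hx)).1, fun y hy => ?_, fun y hy hb => (step y hy hb).2.1⟩
  by_contra hlt
  have := (step y hy (by omega)).2.2
  omega

/-- A span of `k < I` of the `b_j` contains at least `k` of the `a_r`. Spans are expressed through
their annihilators. The induction goes down from hyperplanes (`e` is the number of missing
dimensions): the `R - k` flats obtained by adjoining one more `b_p` meet pairwise in the given flat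
and each contains `k + 1` of the `a_r`; if the given flat contained only `t < k` of them, there
would be at least `t + (R - k)(k + 1 - t) > R` vectors `a_r`. -/
theorem kruskal_flats {I R : ℕ} {a b : Fin R → Fin I → F}
    (hb : GenPos b) (hI : 2 ≤ I) (hIR : I ≤ R)
    (H : ∀ x : Fin I → F, x ≠ 0 → I - 1 ≤ {r | x ⬝ᵥ b r = 0}.ncard →
      {r | x ⬝ᵥ a r = 0}.ncard = I - 1) (e : ℕ) :
    ∀ S : Finset (Fin R), S.card + e = I - 1 →
      S.card ≤ {r | ∀ x : Fin I → F, (∀ j ∈ S, x ⬝ᵥ b j = 0) → x ⬝ᵥ a r = 0}.ncard := by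
  classical
  induction e with
  | zero =>
    intro S hS
    obtain ⟨x, hx0, hx⟩ := exists_annihilator b S (by omega)
    have h1 : I - 1 ≤ {r | x ⬝ᵥ b r = 0}.ncard := by
      rw [show I - 1 = S.card by omega, ← Set.ncard_coe_finset]
      exact Set.ncard_le_ncard (fun r hr => hx r hr) (Set.toFinite _)
    have h2 := H x hx0 h1
    rw [show S.card = I - 1 by omega, ← h2]
    refine Set.ncard_le_ncard (fun r hr y hy => ?_) (Set.toFinite _)
    -- the annihilator of `S` is the line spanned by `x`
    obtain ⟨p, hp⟩ : ∃ p, p ∉ S := by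
      by_contra hcon
      push Not at hcon
      have : S = Finset.univ := Finset.eq_univ_of_forall hcon
      rw [this, Finset.card_univ, Fintype.card_fin] at hS
      omega
    have hxp : x ⬝ᵥ b p ≠ 0 := by
      intro h
      refine hx0 (hb.eq_zero (insert p S) (by rw [Finset.card_insert_of_notMem hp]; omega) ?_)
      intro r hr
      rcases Finset.mem_insert.1 hr with rfl | hr
      · exact h
      · exact hx r hr
    have hyx : y - (y ⬝ᵥ b p / x ⬝ᵥ b p) • x = 0 := by
      refine hb.eq_zero (insert p S) (by rw [Finset.card_insert_of_notMem hp]; omega) ?_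
      intro r hr
      rw [sub_dotProduct, smul_dotProduct, smul_eq_mul]
      rcases Finset.mem_insert.1 hr with rfl | hr
      · rw [div_mul_cancel₀ _ hxp, sub_self]
      · rw [hx r hr, hy r hr]; simp
    rw [sub_eq_zero.1 hyx, smul_dotProduct, show x ⬝ᵥ a r = 0 from hr, smul_zero]
  | succ e ih =>
    intro S hS
    let T : Finset (Fin R) → Finset (Fin R) := fun S =>
      Finset.univ.filter fun r => ∀ x : Fin I → F, (∀ j ∈ S, x ⬝ᵥ b j = 0) → x ⬝ᵥ a r = 0
    have hT : ∀ S, {r | ∀ x : Fin I → F, (∀ j ∈ S, x ⬝ᵥ b j = 0) → x ⬝ᵥ a r = 0}.ncard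
        = (T S).card := by
      intro S
      rw [← Set.ncard_coe_finset]
      congr 1
      ext r
      simp [T]
    rw [hT]
    have mono : ∀ p, T S ⊆ T (insert p S) := by
      intro p r hr
      simp only [T, Finset.mem_filter, Finset.mem_univ, true_and] at hr ⊢
      exact fun x hx => hr x fun j hj => hx j (Finset.mem_insert_of_mem hj)
    have hlow : ∀ p ∈ Sᶜ, S.card + 1 - (T S).card ≤ (T (insert p S) \ T S).card := by
      intro p hp
      have hp' : p ∉ S := by simpa using hp
      have h1 := ih (insert p S) (by rw [Finset.card_insert_of_notMem hp']; omega)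
      rw [hT, Finset.card_insert_of_notMem hp'] at h1
      rw [Finset.card_sdiff_of_subset (mono p)]
      omega
    have hdisj : (Sᶜ : Set (Fin R)).PairwiseDisjoint fun p => T (insert p S) \ T S := by
      intro p hp p' hp' hne
      rw [Function.onFun, Finset.disjoint_left]
      intro r hr hr'
      simp only [T, Finset.mem_sdiff, Finset.mem_filter, Finset.mem_univ, true_and] at hr hr'
      refine hr.2 fun x hx => ?_
      have hp1 : p ∉ S := by simpa using hp
      have hp2 : p' ∉ S := by simpa using hp'
      obtain ⟨φ, hφ, hφ1⟩ := hb.exists_dual hIR (insert p' S)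
        (by rw [Finset.card_insert_of_notMem hp2]; omega) p (by simp [hne, hp1])
      have e1 := hr.1 (x - (x ⬝ᵥ b p) • φ) (by
        intro j hj
        rw [sub_dotProduct, smul_dotProduct, smul_eq_mul]
        rcases Finset.mem_insert.1 hj with rfl | hj
        · rw [hφ1]; ring
        · rw [hx j hj, hφ j (Finset.mem_insert_of_mem hj)]; ring)
      have e2 := hr'.1 φ hφ
      rw [sub_dotProduct, smul_dotProduct, e2, smul_zero, sub_zero] at e1
      exact e1
    have hsum : (R - S.card) * (S.card + 1 - (T S).card) ≤ R - (T S).card := by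
      calc (R - S.card) * (S.card + 1 - (T S).card)
          = ∑ p ∈ Sᶜ, (S.card + 1 - (T S).card) := by
            rw [Finset.sum_const, Finset.card_compl, Fintype.card_fin, smul_eq_mul]
        _ ≤ ∑ p ∈ Sᶜ, (T (insert p S) \ T S).card := Finset.sum_le_sum hlow
        _ = (Sᶜ.biUnion fun p => T (insert p S) \ T S).card :=
            (Finset.card_biUnion (by simpa using hdisj)).symm
        _ ≤ ((T S)ᶜ).card := Finset.card_le_card (by
            intro r hr
            obtain ⟨p, -, hp⟩ := Finset.mem_biUnion.1 hr
            simpa using (Finset.mem_sdiff.1 hp).2)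
        _ = R - (T S).card := by rw [Finset.card_compl, Fintype.card_fin]
    by_contra hlt
    obtain ⟨g, hg⟩ : ∃ g, S.card + 1 = (T S).card + 2 + g := ⟨S.card - 1 - (T S).card, by omega⟩
    obtain ⟨h, hh⟩ : ∃ h, R = S.card + 2 + h := ⟨R - S.card - 2, by omega⟩
    rw [show R - S.card = h + 2 by omega, show S.card + 1 - (T S).card = g + 2 by omega,
      show R - (T S).card = h + g + 3 by omega] at hsum
    nlinarith [Nat.zero_le (h * g)]

theorem kruskal_permutation {I R R' : ℕ} {a : Fin R → Fin I → F} {b : Fin R' → Fin I → F}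
    (ha : GenPos a) (hI : 2 ≤ I) (hIR : I ≤ R) (hR' : R' ≤ R)
    (H : ∀ x : Fin I → F, {r | x ⬝ᵥ b r ≠ 0}.ncard ≤ R - I + 1 →
      {r | x ⬝ᵥ a r ≠ 0}.ncard ≤ {r | x ⬝ᵥ b r ≠ 0}.ncard) :
    R' = R ∧ ∃ (σ : Fin R' → Fin R) (t : Fin R' → F), Function.Injective σ ∧
      ∀ j, b j = t j • a (σ j) := by
  obtain ⟨rfl, hb, h0⟩ := kruskal_count ha (by omega) hIR hR' H
  refine ⟨rfl, ?_⟩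
  have key : ∀ j, ∃ (r : Fin R') (s : F), s ≠ 0 ∧ a r = s • b j := by
    intro j
    have h1 := kruskal_flats hb hI hIR h0 (I - 2) {j} (by simp; omega)
    rw [Finset.card_singleton] at h1
    obtain ⟨r, hr⟩ := Set.nonempty_of_ncard_ne_zero (Nat.one_le_iff_ne_zero.1 h1)
    obtain ⟨φ, -, hφ⟩ := hb.exists_dual hIR ∅ (by simp; omega) j (by simp)
    obtain ⟨ψ, -, hψ⟩ := ha.exists_dual hIR ∅ (by simp; omega) r (by simp)
    have e : a r = (φ ⬝ᵥ a r) • b j := by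
      funext i
      have := hr (Pi.single i 1 - b j i • φ) (by simp [sub_dotProduct, hφ])
      rw [sub_dotProduct, single_dotProduct, smul_dotProduct, one_mul, sub_eq_zero] at this
      rw [this]
      simp [mul_comm]
    refine ⟨r, _, ?_, e⟩
    intro hz
    rw [hz, zero_smul] at e
    simp [e] at hψ
  choose σ s hs hσ using key
  refine ⟨σ, fun j => (s j)⁻¹, ?_, fun j => by rw [hσ, inv_smul_smul₀ (hs j)]⟩
  intro j j' hjj
  by_contra hne
  obtain ⟨φ, hφ, hφ1⟩ := hb.exists_dual hIR {j'} (by simp; omega) j (by simpa using hne)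
  have e := hσ j
  rw [hjj, hσ j'] at e
  have := congrArg (fun v => φ ⬝ᵥ v) e
  simp [hφ j' (by simp), hφ1] at this
  exact hs j this.symm

/-! ### Uniqueness under general position and the rank condition -/

theorem sliceMat_apply {I K R : ℕ} (a : Fin R → Fin I → F) (c : Fin R → Fin K → F)
    (d : Fin R → F) (i : Fin I) (k : Fin K) :
    sliceMat a c d i k = ∑ r, a r i * d r * c r k := by
  rw [sliceMat, Matrix.mul_apply]
  simp [Matrix.mul_diagonal]

theorem rank_sliceMat_le {I K R : ℕ} (a : Fin R → Fin I → F) (c : Fin R → Fin K → F)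
    (d : Fin R → F) : (sliceMat a c d).rank ≤ {r | d r ≠ 0}.ncard := by
  classical
  have h1 := Matrix.rank_mul_le_left ((Matrix.of a).transpose * Matrix.diagonal d) (Matrix.of c)
  have h2 := Matrix.rank_mul_le_right (Matrix.of a).transpose (Matrix.diagonal d)
  rw [Matrix.rank_diagonal] at h2
  have h3 : {r | d r ≠ 0}.ncard = Fintype.card {r // d r ≠ 0} := by
    rw [← Nat.card_coe_set_eq, Nat.card_eq_fintype_card]
    rfl
  rw [h3]
  exact h1.trans h2

/-- Every combination `Σ_r d_r a_r c_rᵀ` with at least `I` nonzero weights has rank greater than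
`R - I + 1`. The subtraction is meant for `I ≤ R`. -/
def RankCond {I K R : ℕ} (a : Fin R → Fin I → F) (c : Fin R → Fin K → F) : Prop :=
  ∀ d : Fin R → F, I ≤ {r | d r ≠ 0}.ncard → R - I + 1 < (sliceMat a c d).rank

theorem support_le_rank {I K R : ℕ} {a : Fin R → Fin I → F} {c : Fin R → Fin K → F}
    (ha : GenPos a) (hc : GenPos c) (hW : RankCond a c) (hIR : I ≤ R) (hKR : K ≤ R)
    (hRK : R - I + 1 < K) (d : Fin R → F) (w : ℕ) (hw : w ≤ R - I + 1)
    (hr : (sliceMat a c d).rank ≤ w) : {r | d r ≠ 0}.ncard ≤ w := by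
  classical
  by_contra hlt
  push Not at hlt
  rcases le_or_gt I {r | d r ≠ 0}.ncard with h | h
  · have := hW d h
    omega
  · have hcard : {r | d r ≠ 0}.ncard = (Finset.univ.filter fun r => d r ≠ 0).card := by
      rw [← Set.ncard_coe_finset]; congr 1; ext r; simp
    have := rank_lower ha hc hIR hKR d w (Finset.univ.filter fun r => d r ≠ 0)
      (by simp) (by omega) (by omega) (by omega)
    omega

/-- Any decomposition into at most `R` terms agrees with the given one up to order. -/
theorem decomp_unique {I K R R' : ℕ} {a : Fin R → Fin I → F} {c : Fin R → Fin K → F}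
    {b : Fin R' → Fin I → F} {c' : Fin R' → Fin K → F}
    (ha : GenPos a) (hc : GenPos c) (hW : RankCond a c) (hI : 2 ≤ I) (hIR : I ≤ R) (hKR : K ≤ R)
    (hRK : R - I + 1 < K) (hRI : R < 2 * I) (hR' : R' ≤ R)
    (hT : ∀ i j k, ∑ r, a r i * a r j * c r k = ∑ r, b r i * b r j * c' r k) :
    ∃ σ : Fin R' ≃ Fin R, ∀ r i j k,
      b r i * b r j * c' r k = a (σ r) i * a (σ r) j * c (σ r) k := by
  have contr : ∀ x : Fin I → F,
      sliceMat a c (fun r => x ⬝ᵥ a r) = sliceMat b c' (fun r => x ⬝ᵥ b r) := by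
    intro x
    ext i k
    rw [sliceMat_apply, sliceMat_apply]
    have swap : ∀ {Q : ℕ} (u : Fin Q → Fin I → F) (v : Fin Q → Fin K → F),
        ∑ r, u r i * (x ⬝ᵥ u r) * v r k = ∑ j, x j * ∑ r, u r i * u r j * v r k := by
      intro Q u v
      simp only [dotProduct, Finset.mul_sum, Finset.sum_mul]
      rw [Finset.sum_comm]
      refine Finset.sum_congr rfl fun j _ => Finset.sum_congr rfl fun r _ => by ring
    rw [swap, swap]
    simp only [hT]
  obtain ⟨rfl, σ, t, hσ, hb⟩ := kruskal_permutation (b := b) ha hI hIR hR' (by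
    intro x hx
    refine support_le_rank ha hc hW hIR hKR hRK _ _ hx ?_
    rw [contr]
    exact rank_sliceMat_le _ _ _)
  let e : Fin R' ≃ Fin R' := Equiv.ofBijective σ (Finite.injective_iff_bijective.1 hσ)
  refine ⟨e, ?_⟩
  have hδ : ∀ k, (fun r => c r k - t (e.symm r) ^ 2 * c' (e.symm r) k) = 0 := by
    intro k
    refine ha.khatriRao hIR hRI _ fun i j => ?_
    have h1 := hT i j k
    rw [← e.symm.sum_comp (fun r => b r i * b r j * c' r k), ← sub_eq_zero,
      ← Finset.sum_sub_distrib] at h1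
    rw [← h1]
    refine Finset.sum_congr rfl fun r _ => ?_
    have hr : b (e.symm r) = t (e.symm r) • a r := by
      rw [hb]; congr 2; exact e.apply_symm_apply r
    rw [hr]
    simp only [Pi.smul_apply, smul_eq_mul]
    ring
  intro r i j k
  have h2 := congrFun (hδ k) (e r)
  simp only [Equiv.symm_apply_apply, Pi.zero_apply, sub_eq_zero] at h2
  rw [h2, hb r]
  have : e r = σ r := rfl
  rw [this]
  simp only [Pi.smul_apply, smul_eq_mul]
  ring

theorem GenPos.ne_zero {n R : ℕ} {a : Fin R → Fin n → F} (ha : GenPos a) (hn : 0 < n)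
    (hnR : n ≤ R) (r : Fin R) : a r ≠ 0 := by
  obtain ⟨φ, -, hφ⟩ := ha.exists_dual hnR ∅ (by simpa using hn) r (by simp)
  rintro h
  simp [h] at hφ

theorem sfsCPDUnique_of_genPos {I K R : ℕ} {A : Fin I → Fin R → F} {C : Fin K → Fin R → F}
    (ha : GenPos fun r i => A i r) (hc : GenPos fun r k => C k r)
    (hW : RankCond (fun r i => A i r) (fun r k => C k r))
    (hI : 2 ≤ I) (hIR : I ≤ R) (hKR : K ≤ R) (hRK : R - I + 1 < K) (hRI : R < 2 * I) :
    SfsCPDUnique (sfsSum A C) := by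
  intro b b' c c' hb hb'
  have hle : sfsRank (sfsSum A C) ≤ R := by
    refine Nat.sInf_le ⟨fun r i => A i r, fun r k => C k r, ?_, ?_, ?_⟩
    · exact ha.ne_zero (by omega) hIR
    · exact hc.ne_zero (by omega) hKR
    · intro i j k; rfl
  obtain ⟨σ, hσ⟩ := decomp_unique ha hc hW hI hIR hKR hRK hRI hle hb.2.2
  obtain ⟨τ, hτ⟩ := decomp_unique ha hc hW hI hIR hKR hRK hRI hle hb'.2.2
  refine ⟨σ.trans τ.symm, fun r i j k => ?_⟩
  rw [hσ, hτ]
  simp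

end Deterministic


/-! ### Null sets from dimension counts -/

/-- A differentiable map from a space of smaller dimension has a null range: precomposed with a linear
surjection it becomes a self-map with everywhere singular derivative. -/
theorem measure_range_eq_zero {E P : Type*} [NormedAddCommGroup E] [NormedSpace ℝ E]
    [FiniteDimensional ℝ E] [MeasurableSpace E] [BorelSpace E] (μ : Measure E)
    [μ.IsAddHaarMeasure] [NormedAddCommGroup P] [NormedSpace ℝ P] [FiniteDimensional ℝ P]
    (hlt : Module.finrank ℝ P < Module.finrank ℝ E) (f : P → E) (hf : Differentiable ℝ f) :
    μ (Set.range f) = 0 := by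
  obtain ⟨i, hi⟩ : ∃ i : P →ₗ[ℝ] E, Function.Injective i := by
    refine Module.Free.exists_linearMap_injective_of_lift_rank_lt ?_
    rw [← Module.finrank_eq_rank, ← Module.finrank_eq_rank]
    simp only [Cardinal.lift_natCast, Nat.cast_lt]
    exact hlt
  obtain ⟨g, hg⟩ := LinearMap.exists_leftInverse_of_injective i (LinearMap.ker_eq_bot.2 hi)
  have hsurj : Function.Surjective g := fun p => ⟨i p, LinearMap.congr_fun hg p⟩
  let G : E →L[ℝ] P := LinearMap.toContinuousLinearMap g
  have hr : Set.range f = (f ∘ G) '' Set.univ := by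
    rw [Set.image_univ]
    exact (hsurj.range_comp f).symm
  rw [hr]
  refine addHaar_image_eq_zero_of_det_fderivWithin_eq_zero μ
    (f' := fun x => (fderiv ℝ f (G x)).comp G) (fun x _ => ?_) (fun x _ => ?_)
  · exact ((hf (G x)).hasFDerivAt.comp x G.hasFDerivAt).hasFDerivWithinAt
  · rw [ContinuousLinearMap.det, LinearMap.det_eq_zero_iff_ker_ne_bot]
    have hk : LinearMap.ker g ≠ ⊥ := LinearMap.ker_ne_bot_of_finrank_lt hlt
    obtain ⟨y, hy, hy0⟩ := Submodule.exists_mem_ne_zero_of_ne_bot hk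
    intro hbot
    refine hy0 ?_
    rw [← Submodule.mem_bot ℝ, ← hbot, LinearMap.mem_ker]
    have : G y = 0 := hy
    simp [this]

/-- The same with dimensions counted over `F = ℝ` or `ℂ`. -/
theorem measure_range_eq_zero_of_finrank_lt {F : Type*} [RCLike F] {E P : Type*}
    [NormedAddCommGroup E] [NormedSpace ℝ E]
    [Module F E] [IsScalarTower ℝ F E] [Module.Free F E]
    [FiniteDimensional ℝ E] [MeasurableSpace E] [BorelSpace E] (μ : Measure E)
    [μ.IsAddHaarMeasure] [NormedAddCommGroup P] [NormedSpace ℝ P] [FiniteDimensional ℝ P]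
    [Module F P] [IsScalarTower ℝ F P] [Module.Free F P]
    (hlt : Module.finrank F P < Module.finrank F E) (f : P → E) (hf : Differentiable ℝ f) :
    μ (Set.range f) = 0 := by
  refine measure_range_eq_zero μ ?_ f hf
  rw [← Module.finrank_mul_finrank ℝ F P, ← Module.finrank_mul_finrank ℝ F E]
  exact Nat.mul_lt_mul_of_pos_left hlt Module.finrank_pos

theorem isAddHaarMeasure_pi {F : Type*} [RCLike F] [MeasureSpace F] [BorelSpace F]
    [(volume : Measure F).IsAddHaarMeasure] (a b : ℕ) :
    (volume : Measure (Fin a → Fin b → F)).IsAddHaarMeasure := by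
  have : SecondCountableTopology F := inferInstance
  have : SigmaFinite (volume : Measure F) := inferInstance
  have : (volume : Measure (Fin b → F)).IsAddHaarMeasure := inferInstance
  infer_instance

theorem isAddHaarMeasure_prod {F : Type*} [RCLike F] [MeasureSpace F] [BorelSpace F]
    [(volume : Measure F).IsAddHaarMeasure] (a b c : ℕ) :
    (volume : Measure ((Fin a → Fin b → F) × (Fin c → Fin b → F))).IsAddHaarMeasure := by
  have : SecondCountableTopology F := inferInstance
  have : SigmaFinite (volume : Measure F) := inferInstance
  have : SigmaFinite (volume : Measure (Fin b → F)) := inferInstance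
  have := isAddHaarMeasure_pi (F := F) a b
  have := isAddHaarMeasure_pi (F := F) c b
  exact inferInstanceAs (Measure.prod volume volume).IsAddHaarMeasure

theorem differentiable_det {P F : Type*} [NormedAddCommGroup P] [NormedSpace ℝ P] [RCLike F]
    {q : ℕ} (M : P → Matrix (Fin q) (Fin q) F)
    (h : ∀ i j, Differentiable ℝ fun p => M p i j) : Differentiable ℝ fun p => (M p).det := by
  simp only [Matrix.det_apply]
  refine Differentiable.fun_sum fun σ _ => ?_
  refine Differentiable.fun_const_smul ?_ _
  have hprod : ∀ s : Finset (Fin q), Differentiable ℝ fun p => ∏ i ∈ s, M p (σ i) i := by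
    intro s
    induction s using Finset.induction_on with
    | empty => simp
    | insert i s hi ih =>
      simp only [Finset.prod_insert hi]
      exact (h _ _).mul ih
  exact hprod _

theorem differentiable_adjugate {P F : Type*} [NormedAddCommGroup P] [NormedSpace ℝ P] [RCLike F]
    {q : ℕ} (M : P → Matrix (Fin q) (Fin q) F)
    (h : ∀ i j, Differentiable ℝ fun p => M p i j) (i j : Fin q) :
    Differentiable ℝ fun p => (M p).adjugate i j := by
  simp only [Matrix.adjugate_apply]
  refine differentiable_det _ fun k l => ?_
  simp only [Matrix.updateRow_apply]
  split_ifs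
  · fun_prop
  · exact h _ _

/-! ### Echelon forms and kernels -/

/-- A matrix with linearly independent rows has an invertible maximal minor; `e` moves its columns to
the front. -/
theorem exists_minor {F : Type*} [Field F] {q n : ℕ} (N : Matrix (Fin q) (Fin n) F)
    (h : ∀ z, Matrix.vecMul z N = 0 → z = 0) :
    ∃ e : Fin n ≃ Fin q ⊕ Fin (n - q), (N.submatrix id (e.symm ∘ Sum.inl)).det ≠ 0 := by
  classical
  have hli : LinearIndependent F N.row := by
    rw [← Matrix.vecMul_injective_iff]
    intro x y hxy
    have := h (x - y) (by rw [Matrix.sub_vecMul]; exact sub_eq_zero.2 hxy)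
    exact sub_eq_zero.1 this
  have hrank : N.rank = q := by simpa using hli.rank_matrix
  obtain ⟨κ, g, hg, hspan, hgli⟩ := exists_linearIndependent' F N.col
  have : Finite κ := Finite.of_injective g hg
  have := Fintype.ofFinite κ
  have hcard : Fintype.card κ = q := by
    rw [← finrank_span_eq_card hgli, hspan, ← Matrix.rank_eq_finrank_span_cols, hrank]
  let k : Fin q ≃ κ := (Fintype.equivFinOfCardEq hcard).symm
  let J : Fin q → Fin n := g ∘ k
  have hJ : Function.Injective J := hg.comp k.injective
  have hcompl : Fintype.card ((Set.range J)ᶜ : Set (Fin n)) = n - q := by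
    rw [Fintype.card_compl_set, Fintype.card_fin, Set.card_range_of_injective hJ, Fintype.card_fin]
  let e : Fin q ⊕ Fin (n - q) ≃ Fin n :=
    ((Equiv.ofInjective J hJ).sumCongr (Fintype.equivFinOfCardEq hcompl).symm).trans
      (Equiv.Set.sumCompl (Set.range J))
  refine ⟨e.symm, ?_⟩
  have he : (e.symm.symm ∘ Sum.inl) = J := by
    funext t
    simp [e]
  rw [he, ← isUnit_iff_ne_zero, ← Matrix.isUnit_iff_isUnit_det,
    ← Matrix.linearIndependent_cols_iff_isUnit]
  exact hgli.comp k k.injective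

/-- A `q × n` matrix with an identity block, at the columns that `e` sends to `Fin q`. -/
def echelon {F : Type*} [Field F] {q n : ℕ} (e : Fin n ≃ Fin q ⊕ Fin (n - q))
    (l : Fin q → Fin (n - q) → F) : Matrix (Fin q) (Fin n) F :=
  Matrix.of fun s i => Sum.elim (fun t => if s = t then 1 else 0) (fun t => l s t) (e i)

/-- A matrix with `n` rows and corank at least `q` is annihilated from the left by a `q × n` matrix
with an identity block. -/
theorem exists_echelon {F : Type*} [Field F] {q n : ℕ} {V : Type*} [Fintype V]
    (M : Matrix (Fin n) V F) (h : M.rank + q ≤ n) :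
    ∃ (e : Fin n ≃ Fin q ⊕ Fin (n - q)) (l : Fin q → Fin (n - q) → F), echelon e l * M = 0 := by
  classical
  have hker : q ≤ Module.finrank F (LinearMap.ker (Matrix.transpose M).mulVecLin) := by
    have h1 := LinearMap.finrank_range_add_finrank_ker (Matrix.transpose M).mulVecLin
    have h2 : Module.finrank F (LinearMap.range (Matrix.transpose M).mulVecLin) = M.rank := by
      rw [← Matrix.rank_transpose M]; rfl
    rw [h2, Module.finrank_pi, Fintype.card_fin] at h1
    omega
  obtain ⟨v, hv⟩ := exists_linearIndependent_of_le_finrank hker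
  let N : Matrix (Fin q) (Fin n) F := Matrix.of fun s => (v s : Fin n → F)
  have hN : LinearIndependent F N.row :=
    hv.map' (Submodule.subtype _) (Submodule.ker_subtype _)
  have hNM : N * M = 0 := by
    ext s k
    have := congrFun (LinearMap.mem_ker.1 (v s).2) k
    rw [Matrix.mulVecLin_apply, Matrix.mulVec_transpose] at this
    exact this
  obtain ⟨e, he⟩ := exists_minor N (by
    rw [← Matrix.vecMul_injective_iff] at hN
    intro z hz
    exact hN (by simpa using hz))
  set B := N.submatrix id (e.symm ∘ Sum.inl) with hB
  refine ⟨e, fun s t => (B⁻¹ * N) s (e.symm (Sum.inr t)), ?_⟩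
  have key : echelon e (fun s t => (B⁻¹ * N) s (e.symm (Sum.inr t))) = B⁻¹ * N := by
    ext s i
    obtain ⟨j, rfl⟩ := e.symm.surjective i
    rcases j with t | t
    · have h1 : (B⁻¹ * B) s t = (B⁻¹ * N) s (e.symm (Sum.inl t)) := rfl
      rw [← h1, Matrix.nonsing_inv_mul _ (isUnit_iff_ne_zero.2 he)]
      simp [echelon, Matrix.one_apply]
    · simp [echelon]
  rw [key, Matrix.mul_assoc, hNM, Matrix.mul_zero]

theorem echelon_vecMul {F : Type*} [Field F] {q n : ℕ} (e : Fin n ≃ Fin q ⊕ Fin (n - q))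
    (l : Fin q → Fin (n - q) → F) (z : Fin q → F) (h : Matrix.vecMul z (echelon e l) = 0) :
    z = 0 := by
  funext t
  have := congrFun h (e.symm (Sum.inl t))
  simpa [Matrix.vecMul, dotProduct, echelon] using this

/-- A `K × R` matrix whose rows lie in the kernel of `N`, with free coordinates `w` (up to scaling)
outside the block `B` of columns of `N` selected by `e`. The remaining coordinates are given by
Cramer's rule; scaling by `det B` makes the expression polynomial in `N` and `w`. -/
def kerParam {F : Type*} [Field F] {q R K : ℕ} (e : Fin R ≃ Fin q ⊕ Fin (R - q))
    (N : Matrix (Fin q) (Fin R) F) (w : Fin K → Fin (R - q) → F) (k : Fin K) (r : Fin R) : F :=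
  Sum.elim
    (fun t => -∑ s, (N.submatrix id (e.symm ∘ Sum.inl)).adjugate t s *
      ∑ u, N s (e.symm (Sum.inr u)) * w k u)
    (fun u => (N.submatrix id (e.symm ∘ Sum.inl)).det * w k u) (e r)

theorem exists_kerParam {F : Type*} [Field F] {q R K : ℕ} (e : Fin R ≃ Fin q ⊕ Fin (R - q))
    (N : Matrix (Fin q) (Fin R) F) (C : Fin K → Fin R → F)
    (hdet : (N.submatrix id (e.symm ∘ Sum.inl)).det ≠ 0)
    (hC : ∀ s k, ∑ r, N s r * C k r = 0) : ∃ w, kerParam e N w = C := by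
  set B := N.submatrix id (e.symm ∘ Sum.inl) with hB
  refine ⟨fun k u => C k (e.symm (Sum.inr u)) / B.det, ?_⟩
  funext k r
  obtain ⟨j, rfl⟩ := e.symm.surjective r
  rcases j with t | u
  · have h1 : ∀ s, ∑ u, N s (e.symm (Sum.inr u)) * (C k (e.symm (Sum.inr u)) / B.det)
        = -(B.mulVec (fun t => C k (e.symm (Sum.inl t)))) s / B.det := by
      intro s
      have := hC s k
      rw [← e.symm.sum_comp, Fintype.sum_sum_type] at this
      rw [show (B.mulVec (fun t => C k (e.symm (Sum.inl t)))) s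
        = ∑ t, N s (e.symm (Sum.inl t)) * C k (e.symm (Sum.inl t)) from rfl,
        eq_neg_of_add_eq_zero_left this, neg_neg, Finset.sum_div]
      exact Finset.sum_congr rfl fun u _ => by ring
    simp only [kerParam, Equiv.apply_symm_apply, Sum.elim_inl, ← hB, h1]
    have h2 := congrFun (Matrix.mulVec_mulVec (fun t => C k (e.symm (Sum.inl t))) B.adjugate B) t
    rw [Matrix.adjugate_mul, Matrix.smul_mulVec, Matrix.one_mulVec] at h2
    simp only [Pi.smul_apply, smul_eq_mul] at h2
    rw [← Finset.sum_neg_distrib]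
    have h3 : ∀ s, -(B.adjugate t s * (-(B.mulVec (fun t => C k (e.symm (Sum.inl t)))) s / B.det))
        = B.adjugate t s * (B.mulVec (fun t => C k (e.symm (Sum.inl t)))) s / B.det := by
      intro s; ring
    simp only [h3]
    rw [← Finset.sum_div, div_eq_iff hdet, mul_comm, ← h2]
    rfl
  · simp only [kerParam, Equiv.apply_symm_apply, Sum.elim_inr, ← hB]
    field_simp

/-! ### Generic position -/

section Generic

variable {F : Type*} [RCLike F] [MeasureSpace F] [BorelSpace F]
  [(volume : Measure F).IsAddHaarMeasure]

/-- If a nonzero linear form `x`, normalised by `x i₀ = 1`, vanishes on the `n` columns in `S`, then the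
`n` entries of `A` in row `i₀` and columns `S` are functions of the other entries and of the
`n - 1` remaining coordinates of `x`. -/
theorem volume_not_genPos (n R : ℕ) (hn : 0 < n) :
    volume {A : Fin n → Fin R → F | ¬ GenPos fun r i => A i r} = 0 := by
  classical
  let f (i₀ : Fin n) (S : Finset (Fin R)) :
      ({i // i ≠ i₀} → F) × ({i // i ≠ i₀} → Fin R → F) × ({r // r ∉ S} → F) →
        (Fin n → Fin R → F) := fun p i r =>
    if h : i = i₀ then
      if hr : r ∈ S then -∑ i', p.1 i' * p.2.1 i' r else p.2.2 ⟨r, hr⟩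
    else p.2.1 ⟨i, h⟩ r
  have hnull : ∀ (i₀ : Fin n) (S : Finset (Fin R)), S.card = n →
      volume (Set.range (f i₀ S)) = 0 := by
    intro i₀ S hS
    have := isAddHaarMeasure_pi (F := F) n R
    refine measure_range_eq_zero_of_finrank_lt (F := F) volume ?_ _ ?_
    · have h1 : n ≤ R := by
        have := Finset.card_le_univ S
        rw [hS, Fintype.card_fin] at this
        exact this
      obtain ⟨k, rfl⟩ : ∃ k, n = k + 1 := ⟨n - 1, by omega⟩
      have h2 : Fintype.card {r // r ∉ S} = R - (k + 1) := by
        rw [Fintype.card_subtype_compl]; simp [hS]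
      have h3 : Fintype.card {i // i ≠ i₀} = k := by simp
      simp only [Module.finrank_prod, Module.finrank_pi_fintype, Module.finrank_self,
        Finset.sum_const, Finset.card_univ, smul_eq_mul, mul_one, Fintype.card_fin, h2, h3]
      rw [add_mul]
      omega
    · refine differentiable_pi.2 fun i => differentiable_pi.2 fun r => ?_
      simp only [f]
      split_ifs <;> fun_prop
  refine measure_mono_null (t := ⋃ i₀ : Fin n, ⋃ S : {S : Finset (Fin R) // S.card = n},
    Set.range (f i₀ S)) ?_ ?_
  · intro A hA
    simp only [GenPos, Set.mem_ofPred_eq, not_forall, not_lt] at hA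
    obtain ⟨x, hx, hn⟩ := hA
    obtain ⟨i₀, hi₀⟩ := Function.ne_iff.1 hx
    obtain ⟨T, hT, hTn⟩ := Set.exists_subset_card_eq hn
    have hTS : ∀ r ∈ T.toFinset, x ⬝ᵥ (fun i => A i r) = 0 := fun r hr => hT (by simpa using hr)
    refine Set.mem_iUnion₂.2 ⟨i₀, ⟨T.toFinset, by rw [← Set.ncard_eq_toFinset_card', hTn]⟩, ?_⟩
    refine ⟨⟨fun i => x i / x i₀, fun i r => A i r, fun r => A i₀ r⟩, ?_⟩
    funext i r
    simp only [f]
    split_ifs with h1 h2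
    · subst h1
      have h3 := hTS r h2
      rw [dotProduct, Fintype.sum_eq_add_sum_subtype_ne _ i] at h3
      have h4 : x i ≠ 0 := hi₀
      have h5 : ∑ i' : {i' // i' ≠ i}, x i' / x i * A i' r
          = (∑ i' : {i' // i' ≠ i}, x i' * A i' r) / x i := by
        rw [Finset.sum_div]
        exact Finset.sum_congr rfl fun i' _ => by ring
      rw [h5, eq_neg_of_add_eq_zero_right h3]
      field_simp
    · rw [h1]
    · rfl
  · rw [measure_iUnion_null_iff]
    intro i₀
    rw [measure_iUnion_null_iff]
    exact fun S => hnull i₀ S S.2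

/-- The exceptional pairs are parametrised by `A`, the free part `l` of the left annihilator in echelon
form, the weights `d` normalised by `d r₀ = 1`, and kernel coordinates `w` for the rows of `C`. -/
theorem volume_not_rankCond (I K R : ℕ) (hIR : I ≤ R) (hRI : R + 1 < 2 * I)
    (hRK : R + 1 < I + K) (hR : R ≤ (2 * I - R - 1) * (I + K - R - 1)) :
    volume {p : (Fin I → Fin R → F) × (Fin K → Fin R → F) |
      GenPos (fun r i => p.1 i r) ∧ ¬ RankCond (fun r i => p.1 i r) (fun r k => p.2 k r)} = 0 := by
  classical
  obtain ⟨q, hq⟩ : ∃ q, q = 2 * I - R - 1 := ⟨_, rfl⟩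
  let N (e₁ : Fin I ≃ Fin q ⊕ Fin (I - q)) (r₀ : Fin R) (A : Fin I → Fin R → F)
      (l : Fin q → Fin (I - q) → F) (d : {r // r ≠ r₀} → F) : Matrix (Fin q) (Fin R) F :=
    Matrix.of fun s r => (∑ i, echelon e₁ l s i * A i r) * (if h : r = r₀ then 1 else d ⟨r, h⟩)
  let f (e₁ : Fin I ≃ Fin q ⊕ Fin (I - q)) (e₂ : Fin R ≃ Fin q ⊕ Fin (R - q)) (r₀ : Fin R) :
      (Fin I → Fin R → F) × (Fin q → Fin (I - q) → F) × ({r // r ≠ r₀} → F) ×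
        (Fin K → Fin (R - q) → F) → (Fin I → Fin R → F) × (Fin K → Fin R → F) := fun p =>
    (p.1, kerParam e₂ (N e₁ r₀ p.1 p.2.1 p.2.2.1) p.2.2.2)
  have hnull : ∀ e₁ e₂ r₀, volume (Set.range (f e₁ e₂ r₀)) = 0 := by
    intro e₁ e₂ r₀
    have := isAddHaarMeasure_prod (F := F) I R K
    refine measure_range_eq_zero_of_finrank_lt (F := F) volume ?_ _ ?_
    · have h3 : Fintype.card {r // r ≠ r₀} = R - 1 := by simp
      simp only [Module.finrank_prod, Module.finrank_pi_fintype, Module.finrank_self,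
        Finset.sum_const, Finset.card_univ, smul_eq_mul, mul_one, Fintype.card_fin, h3]
      obtain ⟨v, hv⟩ : ∃ v, v = I + K - R - 1 := ⟨_, rfl⟩
      rw [← hq, ← hv] at hR
      obtain ⟨g, hg⟩ : ∃ g, R = q + g := ⟨R - q, by omega⟩
      obtain ⟨m, hm⟩ : ∃ m, I = q + m := ⟨I - q, by omega⟩
      have hKv : K = m + v := by omega
      have e1 : I - q = m := by omega
      have e2 : R - q = g := by omega
      have e3 : K * R = K * g + (q * m + q * v) := by rw [hg, hKv]; ring
      rw [e1, e2, e3]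
      have : 0 < R := by omega
      omega
    · have hN : ∀ s r, Differentiable ℝ fun p : (Fin I → Fin R → F) ×
          (Fin q → Fin (I - q) → F) × ({r // r ≠ r₀} → F) × (Fin K → Fin (R - q) → F) =>
          N e₁ r₀ p.1 p.2.1 p.2.2.1 s r := by
        intro s r
        have hL : ∀ i, Differentiable ℝ fun p : (Fin I → Fin R → F) ×
          (Fin q → Fin (I - q) → F) × ({r // r ≠ r₀} → F) × (Fin K → Fin (R - q) → F) =>
          echelon e₁ p.2.1 s i := by
          intro i
          simp only [echelon, Matrix.of_apply]
          rcases e₁ i with t | t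
          · simp only [Sum.elim_inl]; fun_prop
          · simp only [Sum.elim_inr]; fun_prop
        simp only [N, Matrix.of_apply]
        split_ifs <;> fun_prop
      refine Differentiable.prodMk (by fun_prop) ?_
      refine differentiable_pi.2 fun k => differentiable_pi.2 fun r => ?_
      have hdet := differentiable_det (fun p : (Fin I → Fin R → F) ×
          (Fin q → Fin (I - q) → F) × ({r // r ≠ r₀} → F) × (Fin K → Fin (R - q) → F) =>
          (N e₁ r₀ p.1 p.2.1 p.2.2.1).submatrix id (e₂.symm ∘ Sum.inl)) fun i j => hN _ _
      have hadj := differentiable_adjugate (fun p : (Fin I → Fin R → F) ×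
          (Fin q → Fin (I - q) → F) × ({r // r ≠ r₀} → F) × (Fin K → Fin (R - q) → F) =>
          (N e₁ r₀ p.1 p.2.1 p.2.2.1).submatrix id (e₂.symm ∘ Sum.inl)) fun i j => hN _ _
      simp only [kerParam]
      rcases e₂ r with t | t
      · simp only [Sum.elim_inl]
        exact (Differentiable.fun_sum fun s _ => (hadj t s).mul
          (Differentiable.fun_sum fun u _ => (hN _ _).mul (by fun_prop))).neg
      · simp only [Sum.elim_inr]
        exact hdet.mul (by fun_prop)
  refine measure_mono_null (t := ⋃ e₁, ⋃ e₂, ⋃ r₀, Set.range (f e₁ e₂ r₀)) ?_ ?_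
  · rintro ⟨A, C⟩ ⟨hA, hW⟩
    simp only [RankCond, not_forall, not_lt] at hW
    obtain ⟨d, hd, hrank⟩ := hW
    obtain ⟨r₀, hr₀⟩ := Set.nonempty_of_ncard_ne_zero (s := {r | d r ≠ 0}) (by omega)
    have hr₀' : d r₀ ≠ 0 := hr₀
    obtain ⟨e₁, l, hl⟩ := exists_echelon (q := q) _ (by omega :
      (sliceMat (fun r i => A i r) (fun r k => C k r) d).rank + q ≤ I)
    have hN : N e₁ r₀ A l (fun r => d r / d r₀) = Matrix.of fun s r =>
        (Matrix.vecMul (echelon e₁ l s) (Matrix.of A)) r * (d r / d r₀) := by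
      ext s r
      simp only [N, Matrix.of_apply]
      split_ifs with h
      · rw [h, div_self hr₀']; rfl
      · rfl
    obtain ⟨e₂, he₂⟩ := exists_minor (N e₁ r₀ A l (fun r => d r / d r₀)) (by
      intro z hz
      refine echelon_vecMul e₁ l z ?_
      refine hA.eq_zero {r | d r ≠ 0}.toFinset ?_ ?_
      · rwa [← Set.ncard_eq_toFinset_card']
      · intro r hr
        have hr' : d r ≠ 0 := by simpa using hr
        have h1 := congrFun hz r
        rw [hN] at h1
        have h2 : (Matrix.vecMul z (echelon e₁ l) ⬝ᵥ fun i => A i r) * (d r / d r₀) = 0 := by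
          refine Eq.trans ?_ h1
          have : (Matrix.vecMul z (echelon e₁ l) ⬝ᵥ fun i => A i r) =
            Matrix.vecMul (Matrix.vecMul z (echelon e₁ l)) (Matrix.of A) r := rfl
          rw [this, Matrix.vecMul_vecMul]
          simp only [Matrix.vecMul, dotProduct, Matrix.of_apply, Finset.sum_mul,
            Matrix.mul_apply]
          exact Finset.sum_congr rfl fun i _ => by rw [← Finset.sum_mul, mul_assoc]
        exact (mul_eq_zero.1 h2).resolve_right (div_ne_zero hr' hr₀'))
    obtain ⟨w, hw⟩ := exists_kerParam e₂ (N e₁ r₀ A l (fun r => d r / d r₀)) C he₂ (by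
      intro s k
      have h1 := congrFun (congrFun hl s) k
      rw [hN]
      simp only [sliceMat, ← Matrix.mul_assoc] at h1
      rw [Matrix.mul_apply] at h1
      simp only [Matrix.mul_diagonal] at h1
      have h2 : ∑ r, (Matrix.vecMul (echelon e₁ l s) (Matrix.of A)) r * (d r / d r₀) * C k r
          = (∑ r, (Matrix.vecMul (echelon e₁ l s) (Matrix.of A)) r * d r * C k r) / d r₀ := by
        rw [Finset.sum_div]
        exact Finset.sum_congr rfl fun r _ => by ring
      simp only [Matrix.of_apply]
      rw [h2]
      refine div_eq_zero_iff.2 (Or.inl ?_)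
      exact h1)
    refine Set.mem_iUnion.2 ⟨e₁, Set.mem_iUnion₂.2 ⟨e₂, r₀,
      ⟨(A, l, fun r => d r / d r₀, w), ?_⟩⟩⟩
    simp only [f, hw]
  · simp only [measure_iUnion_null_iff]
    exact hnull

theorem sfsGenericallyUnique_of_le (I K R : ℕ) (hI : 2 ≤ I) (hKI : K ≤ I) (hIR : I ≤ R)
    (hRI : R + 1 < 2 * I) (hRK : R + 1 < I + K)
    (hR : R ≤ (2 * I - R - 1) * (I + K - R - 1)) : SFSGenericallyUnique F I K R := by
  have : SecondCountableTopology F := inferInstance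
  have : SigmaFinite (volume : Measure F) := inferInstance
  have : SigmaFinite (volume : Measure (Fin R → F)) := inferInstance
  have h1 : volume {p : (Fin I → Fin R → F) × (Fin K → Fin R → F) |
      ¬ GenPos fun r i => p.1 i r} = 0 :=
    (Measure.quasiMeasurePreserving_fst (μ := volume) (ν := volume)).preimage_null
      (volume_not_genPos I R (by omega))
  have h2 : volume {p : (Fin I → Fin R → F) × (Fin K → Fin R → F) |
      ¬ GenPos fun r k => p.2 k r} = 0 :=
    (Measure.quasiMeasurePreserving_snd (μ := volume) (ν := volume)).preimage_null
      (volume_not_genPos K R (by omega))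
  have h3 := volume_not_rankCond (F := F) I K R hIR hRI hRK hR
  refine measure_mono_null ?_ (measure_union_null (measure_union_null h1 h2) h3)
  intro p hp
  by_contra hcon
  simp only [Set.mem_union, Set.mem_ofPred_eq, not_or, not_not, not_and] at hcon
  exact hp (sfsCPDUnique_of_genPos hcon.1.1 hcon.1.2 (hcon.2 hcon.1.1) hI hIR (hKI.trans hIR)
    (by omega) (by omega))

end Generic

/-- If `2 ≤ K ≤ I ≤ R` and
`R ≤ (K + 3I − 1 − √((K−I)² + 2K + 6I − 3))/2`, then for `F = ℝ` and `F = ℂ` the SFS-CPD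
of an `I×I×K` SFS-tensor of SFS-rank `R` is generically unique. -/
theorem statement4 (I K R : ℕ) (hK : 2 ≤ K) (hKI : K ≤ I) (hIR : I ≤ R)
    (hR : (R : ℝ) ≤
      ((K : ℝ) + 3 * (I : ℝ) - 1 -
        Real.sqrt (((K : ℝ) - (I : ℝ)) ^ 2 + 2 * (K : ℝ) + 6 * (I : ℝ) - 3)) / 2) :
    SFSGenericallyUnique ℝ I K R ∧ SFSGenericallyUnique ℂ I K R := by
  -- with these `u` and `v`, squaring the bound on `R` gives `R ≤ u v`
  obtain ⟨u, hu⟩ : ∃ u : ℤ, u = 2 * I - R - 1 := ⟨_, rfl⟩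
  obtain ⟨v, hv⟩ : ∃ v : ℤ, v = I + K - R - 1 := ⟨_, rfl⟩
  have hur : (u : ℝ) = 2 * I - R - 1 := by rw [hu]; push_cast; ring
  have hvr : (v : ℝ) = I + K - R - 1 := by rw [hv]; push_cast; ring
  have hs := Real.sqrt_nonneg (((K : ℝ) - (I : ℝ)) ^ 2 + 2 * (K : ℝ) + 6 * (I : ℝ) - 3)
  have hsum : Real.sqrt (((K : ℝ) - (I : ℝ)) ^ 2 + 2 * (K : ℝ) + 6 * (I : ℝ) - 3)
      ≤ u + v + 1 := by rw [hur, hvr]; linarith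
  have hnn : (0 : ℝ) ≤ u + v + 1 := hs.trans hsum
  have hsq := (Real.sqrt_le_left hnn).1 hsum
  have huv : (R : ℝ) ≤ u * v := by
    rw [hur, hvr] at hsq ⊢
    nlinarith
  have huvZ : (R : ℤ) ≤ u * v := by exact_mod_cast huv
  have hnnZ : (0 : ℤ) ≤ u + v + 1 := by exact_mod_cast hnn
  -- `u v > 0` and `u + v ≥ -1` force both factors to be positive
  have hu0 : 0 < u := by
    by_contra h
    rcases lt_or_ge 0 v with h' | h'
    · nlinarith
    · have : u = 0 ∨ v = 0 := by omega
      rcases this with h0 | h0 <;> simp [h0] at huvZ <;> omega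
  have hv0 : 0 < v := by
    by_contra h
    nlinarith
  have hN : R ≤ (2 * I - R - 1) * (I + K - R - 1) := by
    have e1 : ((2 * I - R - 1 : ℕ) : ℤ) = u := by omega
    have e2 : ((I + K - R - 1 : ℕ) : ℤ) = v := by omega
    have : (R : ℤ) ≤ (((2 * I - R - 1) * (I + K - R - 1) : ℕ) : ℤ) := by
      rw [Nat.cast_mul, e1, e2]; exact huvZ
    exact_mod_cast this
  exact ⟨sfsGenericallyUnique_of_le I K R (by omega) hKI hIR (by omega) (by omega) hN,
    sfsGenericallyUnique_of_le I K R (by omega) hKI hIR (by omega) (by omega) hN⟩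
end
end

section
/- Let F = ℝ or ℂ, let A ∈ F^{I×R}, B ∈ F^{J×R}, C ∈ F^{K×R} have nonzero columns, let T = [A,B,C]_R, and set m_C := R − rank(C) + 2. Assume: (i) max(min(k_A, k_B − 1), min(k_A − 1, k_B)) + k_C ≥ R + 1; (ii) condition (W_{m_C}) holds for the triplet (A,B,C); (iii) the Khatri–Rao product A⊙B has full column rank. Then the rank of T equals R and the CPD of T is unique. -/
/-!
Let `[a,b,c]_Q`, `Q ≤ R`, be another decomposition of `T = [A,B,C]_R`. Contracting `T` with a vector
`x` in the third mode gives `A Diag(Cᵀx) Bᵀ = Σ_r ⟨c_r, x⟩ a_r b_rᵀ`, so the rank of the left side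
is at most the number of `c_r` not orthogonal to `x`. The k-rank condition makes any `m_C - 1`
columns of `A`, and of `B`, linearly independent; together with `(W_{m_C})` this gives
`ω(Cᵀx) ≤ #{r | ⟨c_r, x⟩ ≠ 0}` whenever the right side is at most `m_C - 1`. Full column rank of
`A ⊙ B` gives `rank C ≤ rank (c_r)`, so the hypothesis of Kruskal's permutation lemma
(`permutation_lemma`) holds, and the `c_r` are the columns of `C` up to order and scaling; in
particular `Q = R`.

The permutation lemma is proved by comparing, for a subspace `U` spanned by some `c_r`, the number
of columns of `C` in `U` with the number of `c_r` in `U`, by downward induction on `dim U`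
(`memCount_span_le`); on lines the comparison is the matching of columns. Here the columns of `C`
are pairwise non-proportional, because the k-rank condition forces `k_C ≥ 2`.

With equal third factors, contraction with an `x` orthogonal to `k_C - 1` columns of `C` compares
two sums of `n = R + 1 - k_C` rank-one matrices. Comparing column spaces for varying `x` shows that
the columns of one of the first two factors agree up to scaling, and then that the rank-one terms
agree (`terms_eq`).
-/

open MeasureTheory

noncomputable section

/-- The tensor `[A,B,C]_R` with entries `t_{ijk} = Σ_r A i r * B j r * C k r`. -/
def cpdSum {F : Type*} [CommRing F] {I J K R : ℕ}
    (A : Fin I → Fin R → F) (B : Fin J → Fin R → F) (C : Fin K → Fin R → F) :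
    Fin I → Fin J → Fin K → F :=
  fun i j k => ∑ r : Fin R, A i r * B j r * C k r

/-- `T` is the sum of the `R` rank-1 terms `a_r ∘ b_r ∘ c_r` with all vectors nonzero. -/
def IsPD {F : Type*} [CommRing F] {I J K : ℕ} (T : Fin I → Fin J → Fin K → F) (R : ℕ)
    (a : Fin R → Fin I → F) (b : Fin R → Fin J → F) (c : Fin R → Fin K → F) : Prop :=
  (∀ r, a r ≠ 0) ∧ (∀ r, b r ≠ 0) ∧ (∀ r, c r ≠ 0) ∧
    ∀ i j k, T i j k = ∑ r : Fin R, a r i * b r j * c r k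

/-- The rank of a third-order tensor: the minimal number of rank-1 terms. -/
def tensorRank {F : Type*} [CommRing F] {I J K : ℕ} (T : Fin I → Fin J → Fin K → F) : ℕ :=
  sInf {R | ∃ a b c, IsPD T R a b c}

/-- The CPD of `T` is unique: any two decompositions of `T` into `tensorRank T` nonzero
rank-1 terms coincide up to permutation of the rank-1 terms. -/
def CPDUnique {F : Type*} [CommRing F] {I J K : ℕ} (T : Fin I → Fin J → Fin K → F) : Prop :=
  ∀ (a a' : Fin (tensorRank T) → Fin I → F) (b b' : Fin (tensorRank T) → Fin J → F)
    (c c' : Fin (tensorRank T) → Fin K → F),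
    IsPD T (tensorRank T) a b c → IsPD T (tensorRank T) a' b' c' →
    ∃ σ : Equiv.Perm (Fin (tensorRank T)),
      ∀ r i j k, a r i * b r j * c r k = a' (σ r) i * b' (σ r) j * c' (σ r) k

/-- The CPD of an `I×J×K` tensor of rank `R` is generically unique over `F`:
the set of triples `(A,B,C)` for which the CPD of `[A,B,C]_R` is not unique has
Lebesgue measure zero. -/
def CPDGenericallyUnique (F : Type*) [CommRing F] [MeasureSpace F] (I J K R : ℕ) : Prop :=
  volume {p : (Fin I → Fin R → F) × (Fin J → Fin R → F) × (Fin K → Fin R → F) |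
    ¬ CPDUnique (cpdSum p.1 p.2.1 p.2.2)} = 0
open scoped Matrix

/-- The number `ω(λ)` of nonzero entries of a vector. -/
def omegaCount {F : Type*} [Zero F] {R : ℕ} (lam : Fin R → F) : ℕ :=
  Nat.card {r : Fin R // lam r ≠ 0}

/-- The k-rank of a matrix `A`: the largest `k ≤ R` such that every `k` columns of `A`
are linearly independent. -/
def kRank {F : Type*} [Field F] {I R : ℕ} (A : Matrix (Fin I) (Fin R) F) : ℕ :=
  sSup {k | k ≤ R ∧ ∀ s : Finset (Fin R), s.card = k →
    LinearIndependent F (fun r : {x // x ∈ s} => fun i => A i r.1)}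

/-- Condition `(U_m)` for a pair `(A,B)`: whenever
`rank(A·Diag(λ)·Bᵀ) ≤ m−1`, one has `ω(λ) ≤ m−1`. -/
def CondU {F : Type*} [Field F] {I J R : ℕ} (m : ℕ)
    (A : Matrix (Fin I) (Fin R) F) (B : Matrix (Fin J) (Fin R) F) : Prop :=
  ∀ lam : Fin R → F,
    (A * Matrix.diagonal lam * Bᵀ).rank ≤ m - 1 → omegaCount lam ≤ m - 1

/-- Condition `(W_m)` for a triplet `(A,B,C)`: whenever `λ ∈ range(Cᵀ)` and
`rank(A·Diag(λ)·Bᵀ) ≤ m−1`, one has `ω(λ) ≤ m−1`. -/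
def CondW {F : Type*} [Field F] {I J K R : ℕ} (m : ℕ)
    (A : Matrix (Fin I) (Fin R) F) (B : Matrix (Fin J) (Fin R) F)
    (C : Matrix (Fin K) (Fin R) F) : Prop :=
  ∀ lam : Fin R → F, (∃ x : Fin K → F, lam = Cᵀ.mulVec x) →
    (A * Matrix.diagonal lam * Bᵀ).rank ≤ m - 1 → omegaCount lam ≤ m - 1

/-- The Khatri–Rao (columnwise Kronecker) product `A ⊙ B`. -/
def khatriRao {F : Type*} [CommRing F] {I J R : ℕ}
    (A : Matrix (Fin I) (Fin R) F) (B : Matrix (Fin J) (Fin R) F) :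
    Matrix (Fin I × Fin J) (Fin R) F :=
  fun p r => A p.1 r * B p.2 r

/-! ### Kruskal's permutation lemma -/

section Permutation

set_option linter.unusedSectionVars false

open Classical Module Submodule

variable {F W ι κ : Type*} [Field F] [AddCommGroup W] [Module F W] [FiniteDimensional F W]
  [Fintype ι] [Fintype κ]

/-- The number of members of the finite family `c` that lie in the subspace `U`. -/
def memCount (c : ι → W) (U : Submodule F W) : ℕ :=
  (Finset.univ.filter fun r => c r ∈ U).card

/-- The number of members of the finite family `c` on which the functional `f` is nonzero;
for `f = ⟨x, ·⟩` this is `ω(Cᵀx)`. -/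
def nonzeroCount (c : ι → W) (f : W →ₗ[F] F) : ℕ :=
  (Finset.univ.filter fun r => f (c r) ≠ 0).card

lemma memCount_ker_add_nonzeroCount (c : ι → W) (f : W →ₗ[F] F) :
    memCount c (LinearMap.ker f) + nonzeroCount c f = Fintype.card ι := by
  unfold memCount nonzeroCount
  simp only [LinearMap.mem_ker]
  rw [Finset.card_filter_add_card_filter_not]
  simp

lemma finrank_span_image_le_s5 (c : ι → W) (s : Finset ι) :
    finrank F (span F (c '' (s : Set ι))) ≤ s.card := by
  have h := finrank_span_finset_le_card (R := F) (s.image c)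
  rw [Finset.coe_image] at h
  exact h.trans Finset.card_image_le

lemma sup_span_singleton_eq {U P : Submodule F W} (hUP : U ≤ P)
    (hd : finrank F P ≤ finrank F U + 1) {v : W} (hv : v ∈ P) (hvU : v ∉ U) :
    U ⊔ span F {v} = P := by
  refine Submodule.eq_of_le_of_finrank_le ?_ ?_
  · exact sup_le hUP (by rwa [span_singleton_le_iff_mem])
  · have : U < U ⊔ span F {v} := by
      refine lt_of_le_of_ne le_sup_left fun h => hvU ?_
      rw [h]; exact mem_sup_right (mem_span_singleton_self v)
    have := Submodule.finrank_lt_finrank_of_lt this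
    omega

lemma finrank_sup_span_singleton_of_notMem {U : Submodule F W} {v : W} (hvU : v ∉ U) :
    finrank F ↥(U ⊔ span F {v}) = finrank F U + 1 := by
  have h1 : U < U ⊔ span F {v} := by
    refine lt_of_le_of_ne le_sup_left fun h => hvU ?_
    rw [h]; exact mem_sup_right (mem_span_singleton_self v)
  have h1 := Submodule.finrank_lt_finrank_of_lt h1
  have h2 := Submodule.finrank_add_le_finrank_add_finrank U (span F {v})
  have h3 := finrank_span_le_card (R := F) ({v} : Set W)
  simp at h3
  omega

lemma memCount_of_le (c : ι → W) {U P : Submodule F W} (hUP : U ≤ P) :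
    memCount c P = memCount c U +
      (Finset.univ.filter fun r => c r ∉ U ∧ c r ∈ P).card := by
  unfold memCount
  rw [← Finset.card_filter_add_card_filter_not
    (s := Finset.univ.filter fun r => c r ∈ P) (fun r => c r ∈ U)]
  congr 2
  · ext r; simp; exact fun h => hUP h
  · ext r; simp [and_comm]

/-- A vector outside `U` lies in at most one subspace `P ⊇ U` with `dim P ≤ dim U + 1`, so the
columns outside `U` are counted at most once when summing over a set `Ps` of such `P`. -/
lemma sum_card_new_le (c : ι → W) {U : Submodule F W} (Ps : Finset (Submodule F W))
    (hPs : ∀ P ∈ Ps, U ≤ P ∧ finrank F P ≤ finrank F U + 1) :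
    memCount c U + ∑ P ∈ Ps, (Finset.univ.filter fun r => c r ∉ U ∧ c r ∈ P).card
      ≤ Fintype.card ι := by
  rw [← Finset.card_biUnion]
  · unfold memCount
    rw [← Finset.card_union_of_disjoint]
    · exact Finset.card_le_univ _
    · rw [Finset.disjoint_left]
      intro r hr hr'
      simp at hr hr'
      tauto
  · intro P hP Q hQ hPQ
    rw [Function.onFun, Finset.disjoint_left]
    intro r hr hrQ
    simp at hr hrQ
    apply hPQ
    rw [← sup_span_singleton_eq (hPs P hP).1 (hPs P hP).2 hr.2 hr.1,
      ← sup_span_singleton_eq (hPs Q hQ).1 (hPs Q hQ).2 hrQ.2 hrQ.1]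

/-- If every column outside `U` lies in a member of `Ps`, then `U` and the members of `Ps` together
account for all columns. -/
lemma le_sum_card_new (c : ι → W) {U : Submodule F W} (Ps : Finset (Submodule F W))
    (hPs : ∀ r, c r ∉ U → ∃ P ∈ Ps, c r ∈ P) :
    Fintype.card ι ≤
      memCount c U + ∑ P ∈ Ps, (Finset.univ.filter fun r => c r ∉ U ∧ c r ∈ P).card := by
  refine le_trans ?_ (Nat.add_le_add_left Finset.card_biUnion_le _)
  refine le_trans ?_ (Finset.card_union_le _ _)
  rw [← Finset.card_univ]
  apply Finset.card_le_card
  intro r _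
  by_cases hr : c r ∈ U
  · simp [hr]
  · obtain ⟨P, hP, hrP⟩ := hPs r hr
    simp only [Finset.mem_union, Finset.mem_biUnion, Finset.mem_filter, Finset.mem_univ, true_and]
    exact Or.inr ⟨P, hP, hr, hrP⟩

/-- The hypothesis of the permutation lemma in functional form forces the columns `c` into the
span of the columns `d`. -/
lemma mem_span_of_nonzeroCount_le (c : ι → W) (d : κ → W)
    (H : ∀ f : W →ₗ[F] F,
      nonzeroCount d f + finrank F (span F (Set.range d)) ≤ Fintype.card κ + 1 →
      nonzeroCount c f ≤ nonzeroCount d f) (r : ι) : c r ∈ span F (Set.range d) := by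
  by_contra hr
  obtain ⟨f, hf, hk⟩ := Submodule.exists_le_ker_of_notMem hr
  have h0 : nonzeroCount d f = 0 := by
    unfold nonzeroCount
    rw [Finset.card_eq_zero, Finset.filter_eq_empty_iff]
    intro s _
    simpa using hk (subset_span ⟨s, rfl⟩)
  have h1 : finrank F (span F (Set.range d)) ≤ Fintype.card κ := finrank_range_le_card d
  have h2 := H f (by omega)
  rw [h0] at h2
  unfold nonzeroCount at h2
  rw [Nat.le_zero, Finset.card_eq_zero, Finset.filter_eq_empty_iff] at h2
  exact h2 (Finset.mem_univ r) hf

/-- Downward induction on dimension: every subspace spanned by columns of `d` contains at least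
`card ι - card κ` more columns of `c` than of `d`. In codimension one this is the hypothesis;
below that, the inequality for `U` follows by adding up those for the subspaces spanned by `U`
and one more column of `d`, of which there are at least two. -/
lemma memCount_span_le (c : ι → W) (d : κ → W)
    (H : ∀ f : W →ₗ[F] F,
      nonzeroCount d f + finrank F (span F (Set.range d)) ≤ Fintype.card κ + 1 →
      nonzeroCount c f ≤ nonzeroCount d f) (n : ℕ) :
    ∀ S : Set κ, finrank F (span F (d '' S)) + n = finrank F (span F (Set.range d)) →
      memCount d (span F (d '' S)) + Fintype.card ι ≤
        memCount c (span F (d '' S)) + Fintype.card κ := by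
  have hle : ∀ S : Set κ, span F (d '' S) ≤ span F (Set.range d) :=
    fun S => span_mono (Set.image_subset_range d S)
  induction n with
  | zero =>
    intro S hS
    have hU := Submodule.eq_of_le_of_finrank_le (hle S) (by omega)
    rw [hU]
    have h1 : memCount c (span F (Set.range d)) = Fintype.card ι := by
      unfold memCount
      rw [Finset.filter_true_of_mem fun r _ => mem_span_of_nonzeroCount_le c d H r]
      simp
    have h2 : memCount d (span F (Set.range d)) ≤ Fintype.card κ := Finset.card_le_univ _
    omega
  | succ n ih =>
    intro S hS
    set U := span F (d '' S) with hUdef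
    set V := span F (Set.range d) with hV
    rcases Nat.eq_zero_or_pos n with rfl | hn
    · -- codimension one: cut out `U` inside `V` by a functional
      have hne : ∃ v ∈ V, v ∉ U := by
        by_contra! h
        have : V = U := le_antisymm h (hle S)
        rw [this] at hS
        omega
      obtain ⟨v, hvV, hvU⟩ := hne
      obtain ⟨f, hf, hk⟩ := Submodule.exists_le_ker_of_notMem hvU
      have hker : V ⊓ LinearMap.ker f = U := by
        symm
        refine Submodule.eq_of_le_of_finrank_le (le_inf (hle S) hk) ?_
        have : V ⊓ LinearMap.ker f < V := by
          refine lt_of_le_of_ne inf_le_left fun h => hf ?_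
          have : v ∈ V ⊓ LinearMap.ker f := by rw [h]; exact hvV
          exact this.2
        have := Submodule.finrank_lt_finrank_of_lt this
        omega
      have hmem : ∀ w ∈ V, w ∈ LinearMap.ker f ↔ w ∈ U := by
        intro w hw
        rw [← hker]
        exact ⟨fun h => ⟨hw, h⟩, fun h => h.2⟩
      have hc : memCount c (LinearMap.ker f) = memCount c U := by
        unfold memCount
        simp only [hmem _ (mem_span_of_nonzeroCount_le c d H _)]
      have hd : memCount d (LinearMap.ker f) = memCount d U := by
        unfold memCount
        simp only [hmem _ (subset_span (Set.mem_range_self _))]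
      have hUd : finrank F U ≤ memCount d U := by
        have h1 := finrank_span_image_le_s5 (F := F) d (Finset.univ.filter fun r => d r ∈ U)
        refine le_trans (Submodule.finrank_mono ?_) h1
        rw [hUdef]
        apply span_mono
        rintro _ ⟨s, hs, rfl⟩
        refine ⟨s, ?_, rfl⟩
        simp only [Finset.coe_filter, Finset.mem_univ, true_and, Set.mem_ofPred_eq]
        exact subset_span ⟨s, hs, rfl⟩
      have e1 := memCount_ker_add_nonzeroCount c f
      have e2 := memCount_ker_add_nonzeroCount d f
      have e3 := H f (by omega)
      omega
    · set Ps : Finset (Submodule F W) :=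
        (Finset.univ.filter fun r => d r ∉ U).image fun r => U ⊔ span F {d r} with hPs
      have hspan : ∀ r, U ⊔ span F {d r} = span F (d '' (insert r S)) := by
        intro r
        rw [Set.image_insert_eq, span_insert, sup_comm]
      have hP : ∀ P ∈ Ps, U ≤ P ∧ finrank F P = finrank F U + 1 ∧
          memCount d P + Fintype.card ι ≤ memCount c P + Fintype.card κ := by
        intro P hP
        simp only [hPs, Finset.mem_image, Finset.mem_filter, Finset.mem_univ, true_and] at hP
        obtain ⟨r, hr, rfl⟩ := hP
        have hfr := finrank_sup_span_singleton_of_notMem hr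
        refine ⟨le_sup_left, hfr, ?_⟩
        have := ih (insert r S)
        rw [← hspan] at this
        exact this (by omega)
      have hcov : ∀ r, d r ∉ U → ∃ P ∈ Ps, d r ∈ P := by
        intro r hr
        exact ⟨_, Finset.mem_image_of_mem _ (by simpa using hr),
          mem_sup_right (mem_span_singleton_self _)⟩
      have hcard : 2 ≤ Ps.card := by
        by_contra! hlt
        have hle1 : Ps.card ≤ 1 := by omega
        have : ∃ Q : Submodule F W, U ≤ Q ∧ finrank F Q ≤ finrank F U + 1 ∧ ∀ P ∈ Ps, P ≤ Q := by
          rcases Ps.eq_empty_or_nonempty with h | ⟨P, h⟩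
          · exact ⟨U, le_rfl, by omega, by simp [h]⟩
          · refine ⟨P, (hP P h).1, (hP P h).2.1.le, fun Q hQ => ?_⟩
            rw [Finset.card_le_one.mp hle1 Q hQ P h]
        obtain ⟨Q, hUQ, hQ, hall⟩ := this
        have hVQ : V ≤ Q := by
          rw [hV, span_le]
          rintro _ ⟨r, rfl⟩
          by_cases hr : d r ∈ U
          · exact hUQ hr
          · obtain ⟨P, hP, hrP⟩ := hcov r hr
            exact hall P hP hrP
        have := Submodule.finrank_mono hVQ
        omega
      have s1 := sum_card_new_le c Ps fun P h => ⟨(hP P h).1, (hP P h).2.1.le⟩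
      have s2 := le_sum_card_new d Ps hcov
      have s3 : ∑ P ∈ Ps, (memCount d U +
            (Finset.univ.filter fun r => d r ∉ U ∧ d r ∈ P).card + Fintype.card ι) ≤
          ∑ P ∈ Ps, (memCount c U +
            (Finset.univ.filter fun r => c r ∉ U ∧ c r ∈ P).card + Fintype.card κ) := by
        refine Finset.sum_le_sum fun P h => ?_
        rw [← memCount_of_le d (hP P h).1, ← memCount_of_le c (hP P h).1]
        exact (hP P h).2.2
      simp only [Finset.sum_add_distrib, Finset.sum_const, smul_eq_mul] at s3
      generalize Ps.card = p at *
      zify at *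
      nlinarith

/-- Kruskal's permutation lemma for pairwise non-proportional columns `c`. -/
lemma permutation_lemma (c : ι → W) (d : κ → W) (hc0 : ∀ r, c r ≠ 0) (hd0 : ∀ r, d r ≠ 0)
    (hc : ∀ r s, c r ∈ span F {c s} → r = s)
    (hcard : Fintype.card κ ≤ Fintype.card ι)
    (H : ∀ f : W →ₗ[F] F,
      nonzeroCount d f + finrank F (span F (Set.range d)) ≤ Fintype.card κ + 1 →
      nonzeroCount c f ≤ nonzeroCount d f) :
    ∃ σ : κ ≃ ι, ∀ s, ∃ μ : F, μ ≠ 0 ∧ d s = μ • c (σ s) := by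
  have key : ∀ S : Set κ, memCount d (span F (d '' S)) + Fintype.card ι ≤
        memCount c (span F (d '' S)) + Fintype.card κ := by
    intro S
    refine memCount_span_le c d H
      (finrank F (span F (Set.range d)) - finrank F (span F (d '' S))) S ?_
    have := Submodule.finrank_mono (span_mono (R := F) (Set.image_subset_range d S))
    omega
  -- the zero subspace contains no column of `c`
  have hcard' : Fintype.card κ = Fintype.card ι := by
    have := key ∅
    simp only [Set.image_empty, span_empty] at this
    have h0 : memCount c (⊥ : Submodule F W) = 0 := by
      simp [memCount, hc0]
    omega
  have hone : ∀ s, 1 ≤ memCount d (span F {d s}) := by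
    intro s
    unfold memCount
    rw [Nat.one_le_iff_ne_zero, Finset.card_ne_zero]
    exact ⟨s, by simp⟩
  have hline : ∀ s r, c r ∈ span F {d s} → span F {d s} = span F {c r} := by
    intro s r h
    obtain ⟨a, ha⟩ := mem_span_singleton.mp h
    have ha0 : a ≠ 0 := by
      rintro rfl
      exact hc0 r (by rw [← ha, zero_smul])
    rw [← ha]
    exact (span_singleton_smul_eq (IsUnit.mk0 a ha0) (d s)).symm
  have hle1 : ∀ s, memCount c (span F {d s}) ≤ 1 := by
    intro s
    unfold memCount
    rw [Finset.card_le_one]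
    intro r hr r' hr'
    simp only [Finset.mem_filter, Finset.mem_univ, true_and] at hr hr'
    exact hc r r' (by rwa [← hline s r' hr'])
  have hk : ∀ s, memCount d (span F {d s}) ≤ memCount c (span F {d s}) := by
    intro s
    have := key {s}
    rw [Set.image_singleton] at this
    omega
  have hex : ∀ s, ∃ r, c r ∈ span F {d s} := by
    intro s
    have h : memCount c (span F {d s}) ≠ 0 := by have := hone s; have := hk s; omega
    unfold memCount at h
    rw [Finset.card_ne_zero] at h
    obtain ⟨r, hr⟩ := h
    exact ⟨r, by simpa using hr⟩
  choose σ hσ using hex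
  have hinj : Function.Injective σ := by
    intro s s' hss
    have h1 := (hk s).trans (hle1 s)
    unfold memCount at h1
    rw [Finset.card_le_one] at h1
    refine h1 s (by simp) s' ?_
    simp only [Finset.mem_filter, Finset.mem_univ, true_and]
    rw [hline s _ (hσ s), hss, ← hline s' _ (hσ s')]
    exact mem_span_singleton_self _
  refine ⟨Equiv.ofBijective σ ((Fintype.bijective_iff_injective_and_card σ).2 ⟨hinj, hcard'⟩), ?_⟩
  intro s
  have h : d s ∈ span F {c (σ s)} := by
    rw [← hline s _ (hσ s)]
    exact mem_span_singleton_self _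
  obtain ⟨μ, hμ⟩ := mem_span_singleton.mp h
  refine ⟨μ, ?_, hμ.symm⟩
  rintro rfl
  exact hd0 s (by rw [← hμ, zero_smul])

end Permutation

/-! ### Sums of rank-one matrices and the first two factors -/

section Factors

open Module Submodule

variable {F : Type*} [Field F]

lemma kRank_mem {I R : ℕ} (A : Matrix (Fin I) (Fin R) F) :
    kRank A ≤ R ∧ ∀ s : Finset (Fin R), s.card = kRank A →
      LinearIndependent F (fun r : {x // x ∈ s} => fun i => A i r.1) := by
  have := Nat.sSup_mem (s := {k | k ≤ R ∧ ∀ s : Finset (Fin R), s.card = k →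
    LinearIndependent F (fun r : {x // x ∈ s} => fun i => A i r.1)}) ?_ ?_
  · exact this
  · refine ⟨0, Nat.zero_le _, fun s hs => ?_⟩
    rw [Finset.card_eq_zero] at hs
    subst hs
    exact linearIndependent_empty_type
  · exact ⟨R, fun k hk => hk.1⟩

lemma linearIndepOn_of_card_le_kRank {I R : ℕ} (A : Matrix (Fin I) (Fin R) F)
    (s : Finset (Fin R)) (hs : s.card ≤ kRank A) : LinearIndepOn F A.col (s : Set (Fin R)) := by
  obtain ⟨t, hst, ht⟩ := Finset.exists_superset_card_eq hs (by simpa using (kRank_mem A).1)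
  have : LinearIndepOn F A.col (t : Set (Fin R)) := (kRank_mem A).2 t ht
  exact this.mono (by exact_mod_cast hst)

lemma kRank_le_rank {I R : ℕ} (A : Matrix (Fin I) (Fin R) F) : kRank A ≤ A.rank := by
  obtain ⟨t, -, ht⟩ := Finset.exists_superset_card_eq (s := (∅ : Finset (Fin R)))
    (Nat.zero_le (kRank A)) (by simpa using (kRank_mem A).1)
  have h := finrank_span_eq_card (linearIndepOn_of_card_le_kRank A t ht.le)
  rw [Matrix.rank_eq_finrank_span_cols]
  simp only [SetLike.coe_sort_coe, Fintype.card_coe, ht] at h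
  rw [← h]
  refine Submodule.finrank_mono (span_mono ?_)
  rintro _ ⟨x, rfl⟩
  exact ⟨x, rfl⟩

lemma exists_dotProduct_eq {K : ℕ} (f : (Fin K → F) →ₗ[F] F) :
    ∃ y : Fin K → F, ∀ v, f v = v ⬝ᵥ y :=
  ⟨fun k => f fun j => if k = j then 1 else 0, fun v => by
    rw [LinearMap.pi_apply_eq_sum_univ f v]; rfl⟩

lemma exists_biorthogonal {ι : Type*} {K : ℕ} {v : ι → Fin K → F} {s : Set ι}
    (h : LinearIndepOn F v s) {j : ι} (hj : j ∈ s) :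
    ∃ y : Fin K → F, v j ⬝ᵥ y = 1 ∧ ∀ r ∈ s, r ≠ j → v r ⬝ᵥ y = 0 := by
  have hn : v j ∉ span F (v '' (s \ {j})) :=
    h.notMem_span hj
  obtain ⟨f, hf, hk⟩ := Submodule.exists_le_ker_of_notMem hn
  obtain ⟨y, hy⟩ := exists_dotProduct_eq f
  refine ⟨(f (v j))⁻¹ • y, ?_, ?_⟩
  · rw [dotProduct_smul, ← hy, smul_eq_mul, inv_mul_cancel₀ hf]
  · intro r hr hrj
    rw [dotProduct_smul, ← hy, LinearMap.mem_ker.mp (hk (subset_span ⟨r, ⟨hr, hrj⟩, rfl⟩)),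
      smul_zero]

variable {ι : Type*} [Fintype ι] {I J : ℕ}

/-- The matrix `Σ_r λ_r a_r b_rᵀ = A · Diag(λ) · Bᵀ`, with the columns given as families. -/
def outerComb (lam : ι → F) (a : ι → Fin I → F) (b : ι → Fin J → F) :
    Matrix (Fin I) (Fin J) F :=
  fun i j => ∑ r, lam r * a r i * b r j

lemma outerComb_mulVec (lam : ι → F) (a : ι → Fin I → F) (b : ι → Fin J → F) (y : Fin J → F) :
    (outerComb lam a b).mulVec y = ∑ r, (lam r * (b r ⬝ᵥ y)) • a r := by
  ext i
  simp only [Matrix.mulVec, dotProduct, outerComb, Finset.sum_apply, Pi.smul_apply, smul_eq_mul,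
    Finset.sum_mul, Finset.mul_sum]
  rw [Finset.sum_comm]
  refine Finset.sum_congr rfl fun r _ => Finset.sum_congr rfl fun j _ => by ring

lemma outerComb_transpose (lam : ι → F) (a : ι → Fin I → F) (b : ι → Fin J → F) :
    (outerComb lam a b)ᵀ = outerComb lam b a := by
  ext j i
  simp only [Matrix.transpose_apply, outerComb]
  exact Finset.sum_congr rfl fun r _ => by ring

lemma range_outerComb_le (lam : ι → F) (a : ι → Fin I → F) (b : ι → Fin J → F) :
    LinearMap.range (outerComb lam a b).mulVecLin ≤ span F (a '' {r | lam r ≠ 0}) := by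
  rintro _ ⟨y, rfl⟩
  rw [Matrix.mulVecLin_apply, outerComb_mulVec]
  refine sum_mem fun r _ => ?_
  by_cases hr : lam r = 0
  · simp [hr]
  · exact smul_mem _ _ (subset_span ⟨r, hr, rfl⟩)

lemma span_le_range_outerComb (lam : ι → F) (a : ι → Fin I → F) (b : ι → Fin J → F)
    (hb : LinearIndepOn F b {r | lam r ≠ 0}) :
    span F (a '' {r | lam r ≠ 0}) ≤ LinearMap.range (outerComb lam a b).mulVecLin := by
  rw [span_le]
  rintro _ ⟨j, hj, rfl⟩
  obtain ⟨y, hy1, hy0⟩ := exists_biorthogonal hb hj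
  refine ⟨(lam j)⁻¹ • y, ?_⟩
  rw [Matrix.mulVecLin_apply, outerComb_mulVec, Finset.sum_eq_single j]
  · have hj' : lam j ≠ 0 := hj
    rw [dotProduct_smul, hy1, smul_eq_mul, mul_one, mul_inv_cancel₀ hj', one_smul]
  · intro r _ hrj
    by_cases hr : lam r = 0
    · simp [hr]
    · rw [dotProduct_smul, hy0 r hr hrj]; simp
  · simp

lemma finrank_span_image_support_le (lam : ι → F) (a : ι → Fin I → F) :
    finrank F (span F (a '' {r | lam r ≠ 0})) ≤ Nat.card {r // lam r ≠ 0} := by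
  classical
  have h := finrank_span_image_le_s5 (F := F) a (Finset.univ.filter fun r => lam r ≠ 0)
  rw [Finset.coe_filter_univ] at h
  rwa [Nat.card_eq_fintype_card, Fintype.card_subtype]

lemma finrank_span_image_support_eq (lam : ι → F) (a : ι → Fin I → F)
    (ha : LinearIndepOn F a {r | lam r ≠ 0}) :
    finrank F (span F (a '' {r | lam r ≠ 0})) = Nat.card {r // lam r ≠ 0} := by
  classical
  have h := finrank_span_eq_card ha
  rw [Nat.card_eq_fintype_card]
  rw [Set.image_eq_range]
  exact h

lemma rank_outerComb_le (lam : ι → F) (a : ι → Fin I → F) (b : ι → Fin J → F) :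
    (outerComb lam a b).rank ≤ Nat.card {r // lam r ≠ 0} :=
  (Submodule.finrank_mono (range_outerComb_le lam a b)).trans (finrank_span_image_support_le lam a)

lemma le_rank_outerComb (lam : ι → F) (a : ι → Fin I → F) (b : ι → Fin J → F)
    (ha : LinearIndepOn F a {r | lam r ≠ 0}) (hb : LinearIndepOn F b {r | lam r ≠ 0}) :
    Nat.card {r // lam r ≠ 0} ≤ (outerComb lam a b).rank := by
  rw [← finrank_span_image_support_eq lam a ha]
  exact Submodule.finrank_mono (span_le_range_outerComb lam a b hb)

/-- Two expressions of one matrix with the same weights span the same column space, provided the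
first one is made of linearly independent vectors. -/
lemma span_eq_of_outerComb_eq (lam : ι → F) (a a' : ι → Fin I → F) (b b' : ι → Fin J → F)
    (ha : LinearIndepOn F a {r | lam r ≠ 0}) (hb : LinearIndepOn F b {r | lam r ≠ 0})
    (h : outerComb lam a b = outerComb lam a' b') :
    span F (a '' {r | lam r ≠ 0}) = span F (Set.image a' {r | lam r ≠ 0}) := by
  refine Submodule.eq_of_le_of_finrank_le ?_ ?_
  · refine (span_le_range_outerComb lam a b hb).trans ?_
    rw [h]
    exact range_outerComb_le lam a' b'
  · rw [finrank_span_image_support_eq lam a ha]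
    exact finrank_span_image_support_le lam _

/-- Once the third factor matrices agree, so do the rank-one terms. Choosing `x` orthogonal to all
but `n` of the columns `c_r` shows that `b'_j` lies in the span of any `n` columns of `B` that
include `b_j`; since any `n + 1` columns of `B` are independent, `b'_j` is proportional to `b_j`. -/
lemma terms_eq {R K n k : ℕ} (a a' : Fin R → Fin I → F) (b b' : Fin R → Fin J → F)
    (c : Fin R → Fin K → F) (hnk : n + k = R + 1) (hk : 2 ≤ k) (hn : 1 ≤ n)
    (hc : ∀ s : Finset (Fin R), s.card ≤ k → LinearIndepOn F c (s : Set (Fin R)))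
    (ha : ∀ s : Finset (Fin R), s.card ≤ n → LinearIndepOn F a (s : Set (Fin R)))
    (hb : ∀ s : Finset (Fin R), s.card ≤ n + 1 → LinearIndepOn F b (s : Set (Fin R)))
    (h : ∀ x : Fin K → F, outerComb (fun r => c r ⬝ᵥ x) a b = outerComb (fun r => c r ⬝ᵥ x) a' b') :
    ∀ r i j, a' r i * b' r j = a r i * b r j := by
  classical
  have hx : ∀ (S : Finset (Fin R)) (j : Fin R), S.card = n → j ∈ S →
      ∃ x : Fin K → F, c j ⬝ᵥ x = 1 ∧ {r | c r ⬝ᵥ x ≠ 0} ⊆ (S : Set (Fin R)) := by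
    intro S j hS hj
    have hcard : (insert j Sᶜ).card ≤ k := by
      refine (Finset.card_insert_le _ _).trans ?_
      rw [Finset.card_compl, Fintype.card_fin]
      omega
    obtain ⟨x, hx1, hx0⟩ := exists_biorthogonal (hc _ hcard) (j := j) (by simp)
    refine ⟨x, hx1, fun r hr => ?_⟩
    by_contra hrS
    refine hr (hx0 r ?_ ?_)
    · have : r ∉ S := hrS
      simp [this]
    · rintro rfl
      exact hrS hj
  have hS : ∀ j : Fin R, ∃ S : Finset (Fin R), j ∈ S ∧ S.card = n := by
    intro j
    obtain ⟨S, h1, h2⟩ := Finset.exists_superset_card_eq (s := {j}) (n := n) (by simpa using hn)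
      (by rw [Fintype.card_fin]; omega)
    exact ⟨S, by simpa using h1, h2⟩
  have hmem : ∀ (S : Finset (Fin R)) (j : Fin R), S.card = n → j ∈ S →
      b' j ∈ span F (b '' (S : Set (Fin R))) := by
    intro S j hS hj
    obtain ⟨x, hx1, hxS⟩ := hx S j hS hj
    have hT := congrArg Matrix.transpose (h x)
    rw [outerComb_transpose, outerComb_transpose] at hT
    have hsp := span_eq_of_outerComb_eq _ b b' a a' ((hb S (by omega)).mono hxS)
      ((ha S hS.le).mono hxS) hT
    refine span_mono (Set.image_mono hxS) ?_
    rw [hsp]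
    refine subset_span ⟨j, ?_, rfl⟩
    show c j ⬝ᵥ x ≠ 0
    rw [hx1]
    exact one_ne_zero
  have hprop : ∀ j, ∃ β : F, b' j = β • b j := by
    intro j
    obtain ⟨S, hjS, hSn⟩ := hS j
    obtain ⟨t, ht⟩ : ∃ t, t ∉ S := by
      by_contra! hall
      have : S = Finset.univ := Finset.eq_univ_of_forall hall
      rw [this, Finset.card_univ, Fintype.card_fin] at hSn
      omega
    obtain ⟨g, hg⟩ := (Submodule.mem_span_image_finset_iff_exists_fun' F).mp (hmem S j hSn hjS)
    have hg0 : ∀ s ∈ S, s ≠ j → g s = 0 := by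
      intro s hs hsj
      -- exchanging `s` for `t` keeps `b' j` in the span, so its `b s`-coordinate vanishes
      have hcard : (insert t S).card ≤ n + 1 := by
        rw [Finset.card_insert_of_notMem ht, hSn]
      obtain ⟨y, hy1, hy0⟩ := exists_biorthogonal (hb _ hcard) (j := s) (by simp [hs])
      have h1 : b' j ⬝ᵥ y = g s := by
        rw [← hg, sum_dotProduct, Finset.sum_eq_single s]
        · rw [smul_dotProduct, hy1, smul_eq_mul, mul_one]
        · intro r hr hrs
          rw [smul_dotProduct, hy0 r (by simp [hr]) hrs, smul_zero]
        · exact fun hns => absurd hs hns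
      have hcard' : (insert t (S.erase s)).card = n := by
        rw [Finset.card_insert_of_notMem (fun hh => ht (Finset.mem_of_mem_erase hh)),
          Finset.card_erase_of_mem hs]
        omega
      obtain ⟨g', hg'⟩ := (Submodule.mem_span_image_finset_iff_exists_fun' F).mp
        (hmem _ j hcard' (by simp [hjS, hsj.symm]))
      have h2 : b' j ⬝ᵥ y = 0 := by
        rw [← hg', sum_dotProduct]
        refine Finset.sum_eq_zero fun r hr => ?_
        rw [smul_dotProduct, hy0 r, smul_zero]
        · simp only [Finset.mem_insert, Finset.mem_erase] at hr
          simp only [Finset.coe_insert, Set.mem_insert_iff, Finset.mem_coe]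
          tauto
        · rintro rfl
          simp only [Finset.mem_insert, Finset.mem_erase, ne_eq, not_true_eq_false, false_and,
            or_false] at hr
          exact ht (hr ▸ hs)
      rw [← h1, h2]
    refine ⟨g j, ?_⟩
    rw [← hg, Finset.sum_eq_single j]
    · intro r hr hrj
      rw [hg0 r hr hrj, zero_smul]
    · exact fun hns => absurd hjS hns
  choose β hβ using hprop
  have haj : ∀ j, a j = β j • a' j := by
    intro j
    obtain ⟨S, hjS, hSn⟩ := hS j
    obtain ⟨x, hx1, hxS⟩ := hx S j hSn hjS
    obtain ⟨y, hy1, hy0⟩ := exists_biorthogonal (hb S (by omega)) (j := j) hjS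
    have hz : ∀ r, r ≠ j → (c r ⬝ᵥ x) * (b r ⬝ᵥ y) = 0 := by
      intro r hrj
      by_cases hr : c r ⬝ᵥ x = 0
      · rw [hr, zero_mul]
      · rw [hy0 r (hxS hr) hrj, mul_zero]
    have he := congrArg (fun M => Matrix.mulVec M y) (h x)
    simp only [outerComb_mulVec] at he
    rw [Finset.sum_eq_single j, Finset.sum_eq_single j] at he
    · rw [hx1, hβ j, smul_dotProduct, hy1] at he
      simpa using he
    · intro r _ hrj
      rw [hβ r, smul_dotProduct, smul_eq_mul, mul_left_comm, hz r hrj, mul_zero, zero_smul]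
    · simp
    · intro r _ hrj
      rw [hz r hrj, zero_smul]
    · simp
  intro r i j
  rw [haj r, hβ r]
  simp only [Pi.smul_apply, smul_eq_mul]
  ring

end Factors

/-! ### Comparison of two decompositions -/

section Main

open Module Submodule

/-- Any decomposition with at most `R` terms has the same terms as `[A,B,C]_R`. -/
lemma exists_equiv_of_isPD {F : Type*} [Field F] {I J K R : ℕ}
    (A : Matrix (Fin I) (Fin R) F) (B : Matrix (Fin J) (Fin R) F)
    (C : Matrix (Fin K) (Fin R) F)
    (hC : ∀ r, C.col r ≠ 0)
    (h1 : R + 1 ≤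
      max (min (kRank A) (kRank B - 1)) (min (kRank A - 1) (kRank B)) + kRank C)
    (h2 : CondW (R - C.rank + 2) A B C)
    (h3 : (khatriRao A B).rank = R)
    {Q : ℕ} (hQ : Q ≤ R) (a : Fin Q → Fin I → F) (b : Fin Q → Fin J → F) (c : Fin Q → Fin K → F)
    (hT : IsPD (cpdSum A B C) Q a b c) :
    ∃ σ : Fin Q ≃ Fin R, ∀ r i j k,
      a r i * b r j * c r k = A i (σ r) * B j (σ r) * C k (σ r) := by
  classical
  obtain ⟨-, -, hc0, hT⟩ := hT
  have kA := (kRank_mem A).1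
  have kB := (kRank_mem B).1
  have kC := (kRank_mem C).1
  have kCr := kRank_le_rank C
  have rC : C.rank ≤ R := by simpa using C.rank_le_width
  -- contraction of the tensor with `x` in the third mode, computed from both decompositions
  have hcontr : ∀ x : Fin K → F,
      outerComb (fun r => C.col r ⬝ᵥ x) A.col B.col = outerComb (fun r => c r ⬝ᵥ x) a b := by
    intro x
    ext i j
    have := congrArg (fun t : Fin K → F => ∑ k, t k * x k) (funext (hT i j))
    simp only [cpdSum, Finset.sum_mul] at this
    rw [Finset.sum_comm, Finset.sum_comm (s := (Finset.univ : Finset (Fin K)))] at this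
    simp only [outerComb, dotProduct, Finset.sum_mul, Matrix.col_apply]
    refine Eq.trans ?_ (this.trans ?_)
    · refine Finset.sum_congr rfl fun r _ => Finset.sum_congr rfl fun k _ => by ring
    · refine Finset.sum_congr rfl fun r _ => Finset.sum_congr rfl fun k _ => by ring
  have hkr : Function.Injective (khatriRao A B).mulVecLin := by
    rw [← LinearMap.ker_eq_bot, ← Submodule.finrank_eq_zero]
    have := (khatriRao A B).mulVecLin.finrank_range_add_finrank_ker
    rw [Module.finrank_fin_fun] at this
    have h3' : finrank F (LinearMap.range (khatriRao A B).mulVecLin) = R := h3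
    omega
  -- full column rank of `A ⊙ B` puts the columns of `C` into the span of the `c r`
  have hspan : span F (Set.range C.col) ≤ span F (Set.range c) := by
    rw [span_le]
    rintro _ ⟨r, rfl⟩
    by_contra hr
    obtain ⟨f, hf, hk⟩ := Submodule.exists_le_ker_of_notMem hr
    obtain ⟨x, hx⟩ := exists_dotProduct_eq f
    have h0 : ∀ s, c s ⬝ᵥ x = 0 := by
      intro s
      rw [← hx]
      exact hk (subset_span ⟨s, rfl⟩)
    have hz : (khatriRao A B).mulVecLin (fun s => C.col s ⬝ᵥ x) = (khatriRao A B).mulVecLin 0 := by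
      rw [map_zero]
      ext p
      have := congrFun (congrFun (hcontr x) p.1) p.2
      simp only [outerComb, h0, zero_mul, Finset.sum_const_zero] at this
      rw [Matrix.mulVecLin_apply, Pi.zero_apply, ← this]
      simp only [Matrix.mulVec, khatriRao]
      exact Finset.sum_congr rfl fun s _ => by simp only [Matrix.col_apply]; ring
    have := congrFun (hkr hz) r
    rw [← hx] at this
    exact hf this
  have hrank : C.rank ≤ finrank F (span F (Set.range c)) := by
    rw [Matrix.rank_eq_finrank_span_cols]
    exact Submodule.finrank_mono hspan
  have hrankQ : finrank F (span F (Set.range c)) ≤ Q := by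
    have : finrank F (span F (Set.range c)) ≤ Fintype.card (Fin Q) := finrank_range_le_card c
    simpa using this
  obtain ⟨σ, hσ⟩ := permutation_lemma (F := F) C.col c hC hc0 (by
      intro r s hrs
      by_contra hne
      have hI := linearIndepOn_of_card_le_kRank C {r, s}
        ((Finset.card_le_two).trans (by omega))
      refine hI.notMem_span (i := r) (by simp) ?_
      refine span_mono ?_ hrs
      rintro _ rfl
      exact ⟨s, by simp [Ne.symm hne], rfl⟩) (by simpa using hQ) (by
      intro f hf
      obtain ⟨x, hx⟩ := exists_dotProduct_eq f
      rw [Fintype.card_fin] at hf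
      have e1 : nonzeroCount c f = Nat.card {r // c r ⬝ᵥ x ≠ 0} := by
        rw [Nat.card_eq_fintype_card, Fintype.card_subtype]
        unfold nonzeroCount
        simp only [hx]
      have e2 : nonzeroCount C.col f = Nat.card {r // C.col r ⬝ᵥ x ≠ 0} := by
        rw [Nat.card_eq_fintype_card, Fintype.card_subtype]
        unfold nonzeroCount
        simp only [hx]
      have hle := rank_outerComb_le (fun r => c r ⬝ᵥ x) a b
      rw [← hcontr] at hle
      have hM : A * Matrix.diagonal (fun r => C.col r ⬝ᵥ x) * Bᵀ =
          outerComb (fun r => C.col r ⬝ᵥ x) A.col B.col := by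
        ext i j
        rw [Matrix.mul_apply]
        simp only [Matrix.mul_diagonal, Matrix.transpose_apply, outerComb, Matrix.col_apply]
        exact Finset.sum_congr rfl fun r _ => by ring
      have hω : Nat.card {r // C.col r ⬝ᵥ x ≠ 0} ≤ R - C.rank + 2 - 1 :=
        h2 (fun r => C.col r ⬝ᵥ x) ⟨x, rfl⟩ (by rw [hM]; omega)
      rw [Nat.card_eq_fintype_card, Fintype.card_subtype] at hω
      have hA' := linearIndepOn_of_card_le_kRank A _ (hω.trans (by omega))
      have hB' := linearIndepOn_of_card_le_kRank B _ (hω.trans (by omega))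
      rw [Finset.coe_filter_univ] at hA' hB'
      have hge := le_rank_outerComb (fun r => C.col r ⬝ᵥ x) A.col B.col hA' hB'
      omega)
  choose μ hμ0 hμ using hσ
  -- after reindexing and rescaling, the two decompositions share their third factor
  have hcontr' : ∀ x : Fin K → F,
      outerComb (fun r => C.col r ⬝ᵥ x) A.col B.col =
        outerComb (fun r => C.col r ⬝ᵥ x) (fun r => μ (σ.symm r) • a (σ.symm r))
          (fun r => b (σ.symm r)) := by
    intro x
    rw [hcontr]
    ext i j
    simp only [outerComb]
    rw [← Equiv.sum_comp σ]
    refine Finset.sum_congr rfl fun r _ => ?_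
    simp only [Equiv.symm_apply_apply, Pi.smul_apply, smul_eq_mul]
    rw [hμ r, smul_dotProduct, smul_eq_mul]
    ring
  have hterms : ∀ r i j, μ (σ.symm r) * a (σ.symm r) i * b (σ.symm r) j = A i r * B j r := by
    have hCi : ∀ s : Finset (Fin R), s.card ≤ kRank C → _ := linearIndepOn_of_card_le_kRank C
    rcases le_max_iff.mp (show R + 1 - kRank C ≤ _ from
      by omega : R + 1 - kRank C ≤ max (min (kRank A) (kRank B - 1)) (min (kRank A - 1) (kRank B)))
      with hcase | hcase
    · intro r i j
      exact terms_eq (n := R + 1 - kRank C) (k := kRank C) A.col _ B.col _ C.col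
        (by omega) (by omega) (by omega) hCi
        (fun s hs => linearIndepOn_of_card_le_kRank A s (by omega))
        (fun s hs => linearIndepOn_of_card_le_kRank B s (by omega)) hcontr' r i j
    · intro r i j
      have := terms_eq (n := R + 1 - kRank C) (k := kRank C) B.col (fun r => b (σ.symm r)) A.col
        (fun r => μ (σ.symm r) • a (σ.symm r)) C.col
        (by omega) (by omega) (by omega) hCi
        (fun s hs => linearIndepOn_of_card_le_kRank B s (by omega))
        (fun s hs => linearIndepOn_of_card_le_kRank A s (by omega))
        (fun x => by rw [← outerComb_transpose, hcontr', outerComb_transpose]) r j i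
      simp only [Pi.smul_apply, smul_eq_mul, Matrix.col_apply] at this
      rw [mul_comm, this, mul_comm]
  refine ⟨σ, fun r i j k => ?_⟩
  rw [← hterms, hμ r, Equiv.symm_apply_apply]
  simp only [Pi.smul_apply, smul_eq_mul, Matrix.col_apply]
  ring

end Main

/-- Deterministic `(W_m)`-based uniqueness condition for the CPD. -/
theorem statement5 {F : Type*} [RCLike F] {I J K R : ℕ}
    (A : Matrix (Fin I) (Fin R) F) (B : Matrix (Fin J) (Fin R) F)
    (C : Matrix (Fin K) (Fin R) F)
    (hA : ∀ r, (fun i => A i r) ≠ 0) (hB : ∀ r, (fun j => B j r) ≠ 0)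
    (hC : ∀ r, (fun k => C k r) ≠ 0)
    (h1 : R + 1 ≤
      max (min (kRank A) (kRank B - 1)) (min (kRank A - 1) (kRank B)) + kRank C)
    (h2 : CondW (R - C.rank + 2) A B C)
    (h3 : (khatriRao A B).rank = R) :
    tensorRank (cpdSum A B C) = R ∧ CPDUnique (cpdSum A B C) := by
  have hR : IsPD (cpdSum A B C) R A.col B.col C.col := ⟨hA, hB, hC, fun _ _ _ => rfl⟩
  have hrank : tensorRank (cpdSum A B C) = R := by
    refine le_antisymm (Nat.sInf_le ⟨_, _, _, hR⟩) ?_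
    obtain ⟨a, b, c, h⟩ := Nat.sInf_mem
      (s := {Q | ∃ a b c, IsPD (cpdSum A B C) Q a b c}) ⟨R, _, _, _, hR⟩
    have hle : sInf {Q | ∃ a b c, IsPD (cpdSum A B C) Q a b c} ≤ R := Nat.sInf_le ⟨_, _, _, hR⟩
    obtain ⟨σ, -⟩ := exists_equiv_of_isPD A B C hC h1 h2 h3 hle a b c h
    have := Fintype.card_congr σ
    simp only [Fintype.card_fin] at this
    exact this.ge
  refine ⟨hrank, ?_⟩
  unfold CPDUnique
  rw [hrank]
  intro a a' b b' c c' h h'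
  obtain ⟨σ, hσ⟩ := exists_equiv_of_isPD A B C hC h1 h2 h3 le_rfl a b c h
  obtain ⟨τ, hτ⟩ := exists_equiv_of_isPD A B C hC h1 h2 h3 le_rfl a' b' c' h'
  refine ⟨σ.trans τ.symm, fun r i j k => ?_⟩
  rw [hσ, hτ]
  simp
end
end
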